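/- For every positive integer n with n ≡ 2 or 4 (mod 5), one has N̄(0,5,n) < N̄(1,5,n). -/

import Mathlib

/-- An overpartition of `n`: a partition of `n` together with a chosen subset of its
distinct part sizes (the overlined parts). -/
def Overpartition (n : ℕ) : Type :=
  {P : n.Partition × Finset ℕ // P.2 ⊆ P.1.parts.toFinset}

/-- The Dyson rank of an overpartition: largest part minus number of parts. -/
def Overpartition.rank {n : ℕ} (P : Overpartition n) : ℤ :=
  (P.1.1.parts.sup : ℤ) - (P.1.1.parts.card : ℤ)

/-- `nbarRank m n` is the number of overpartitions of `n` with rank `m`. -/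
noncomputable def nbarRank (m : ℤ) (n : ℕ) : ℕ :=
  Nat.card {P : Overpartition n // P.rank = m}

/-- `nbar a c n` is the number of overpartitions of `n` with rank congruent to `a` mod `c`. -/
noncomputable def nbar (a : ℤ) (c : ℕ) (n : ℕ) : ℕ :=
  Nat.card {P : Overpartition n // P.rank ≡ a [ZMOD (c : ℤ)]}

/-- `pbar n` is the number of overpartitions of `n`. -/
noncomputable def pbar (n : ℕ) : ℕ := Nat.card (Overpartition n)

section Part1
open Filter Topology WithZero

namespace OP

abbrev LK := LaurentSeries ℚ

instance : CharZero LK := algebraRat.charZero LK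

def OrdGE (N : ℤ) (x : LK) : Prop := ∀ n < N, x.coeff n = 0

theorem nhds_basis_LK : (𝓝 (0 : LK)).HasBasis (fun _ : ℤ => True) (fun N => {x | OrdGE N x}) := by
  refine ⟨fun s => ?_⟩
  rw [Valued.mem_nhds_zero]
  constructor
  · rintro ⟨γ, hγ⟩
    have h0 : MonoidWithZeroHom.ValueGroup₀.embedding γ.1 ≠ 0 := by simp
    obtain ⟨m, hm⟩ : ∃ m : ℤ, MonoidWithZeroHom.ValueGroup₀.embedding γ.1 = exp (-m) := by
      refine ⟨-(WithZero.log (MonoidWithZeroHom.ValueGroup₀.embedding γ.1)), ?_⟩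
      rw [neg_neg, WithZero.exp_log h0]
    refine ⟨m+1, trivial, fun x hx => hγ ?_⟩
    show Valued.v.restrict x < γ.1
    rw [Valued.v.restrict_lt_iff_lt_embedding, hm]
    refine lt_of_le_of_lt ((LaurentSeries.valuation_le_iff_coeff_lt_eq_zero ℚ (D := m+1)).2 hx) ?_
    rw [WithZero.exp_lt_exp]; omega
  · rintro ⟨N, -, hN⟩
    obtain ⟨x, hx⟩ := LaurentSeries.valuation_surjective ℚ (exp (-N) * exp 1)
    have hne : Valued.v.restrict x ≠ 0 := fun h ↦ by
      have := MonoidWithZeroHom.ValueGroup₀.restrict₀_eq_zero_iff.1 h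
      have h2 : (Valued.v x : ℤᵐ⁰) = 0 := this
      rw [hx] at h2
      simp at h2
    refine ⟨Units.mk0 _ hne, fun y hy => hN ?_⟩
    have hy' : Valued.v.restrict y < Valued.v.restrict x := hy
    have h3 : (Valued.v y : ℤᵐ⁰) < Valued.v x := by
      rwa [Valuation.restrict_lt_iff] at hy'
    rw [hx, ← WithZero.exp_add] at h3
    apply (LaurentSeries.valuation_le_iff_coeff_lt_eq_zero ℚ (D := N)).1
    by_cases hv : (Valued.v y : ℤᵐ⁰) = 0
    · rw [hv]; exact zero_le
    rw [← WithZero.exp_log hv] at h3 ⊢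
    rw [WithZero.exp_lt_exp] at h3
    rw [WithZero.exp_le_exp]; omega


theorem OrdGE.add {N : ℤ} {x y : LK} (hx : OrdGE N x) (hy : OrdGE N y) : OrdGE N (x + y) := by
  intro n hn; simp [hx n hn, hy n hn]

theorem OrdGE.neg {N : ℤ} {x : LK} (hx : OrdGE N x) : OrdGE N (-x) := by
  intro n hn; simp [hx n hn]

theorem OrdGE.zero (N : ℤ) : OrdGE N (0 : LK) := by
  intro n hn; simp

theorem OrdGE.mono {N M : ℤ} {x : LK} (hx : OrdGE N x) (h : M ≤ N) : OrdGE M x := by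
  intro n hn; exact hx n (by omega)

theorem OrdGE.mul {N M : ℤ} {x y : LK} (hx : OrdGE N x) (hy : OrdGE M y) :
    OrdGE (N + M) (x * y) := by
  intro n hn
  rw [HahnSeries.coeff_mul]
  refine Finset.sum_eq_zero fun ij hij => ?_
  rw [Finset.mem_antidiagonal] at hij
  by_cases h : ij.1 < N
  · rw [hx _ h, zero_mul]
  · rw [hy _ (by omega), mul_zero]

/-- the additive subgroup of series of order at least `N` -/
def ordSub (N : ℤ) : AddSubgroup LK where
  carrier := {x | OrdGE N x}
  add_mem' := fun hx hy => hx.add hy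
  zero_mem' := OrdGE.zero N
  neg_mem' := fun hx => hx.neg

theorem ordSub_mem_nhds (N : ℤ) : {x | OrdGE N x} ∈ 𝓝 (0 : LK) :=
  nhds_basis_LK.mem_of_mem (i := N) trivial

instance : NonarchimedeanRing LK where
  is_nonarchimedean := by
    intro U hU
    obtain ⟨N, -, hN⟩ := nhds_basis_LK.mem_iff.1 hU
    refine ⟨⟨ordSub N, ?_⟩, hN⟩
    exact AddSubgroup.isOpen_of_mem_nhds (ordSub N) (g := 0) (ordSub_mem_nhds N)

theorem summable_LK {ι : Type*} (f : ι → LK) (w : ι → ℤ) (hw : ∀ i, OrdGE (w i) (f i))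
    (hfin : ∀ N, {i | w i < N}.Finite) : Summable f := by
  apply NonarchimedeanAddGroup.summable_of_tendsto_cofinite_zero
  rw [nhds_basis_LK.tendsto_right_iff]
  intro N _
  rw [Filter.eventually_cofinite]
  refine (hfin N).subset fun i hi => ?_
  by_contra h
  exact hi ((hw i).mono (not_lt.1 h))

theorem coeff_hasSum {ι : Type*} {f : ι → LK} {a : LK} (h : HasSum f a) (n : ℤ) :
    ∃ s : Finset ι, ∀ t, s ⊆ t → a.coeff n = ∑ i ∈ t, (f i).coeff n := by
  have h1 : ∀ᶠ t : Finset ι in atTop, OrdGE (n+1) (∑ i ∈ t, f i - a) := by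
    have h2 : Tendsto (fun t : Finset ι => ∑ i ∈ t, f i - a) atTop (𝓝 0) := by
      have := (show Tendsto (fun t : Finset ι => ∑ i ∈ t, f i) atTop (𝓝 a) from h).sub_const a
      simpa using this
    exact h2 (ordSub_mem_nhds (n+1))
  obtain ⟨s, hs⟩ := eventually_atTop.1 h1
  refine ⟨s, fun t ht => ?_⟩
  have := hs t ht n (by omega)
  rw [HahnSeries.coeff_sub, sub_eq_zero] at this
  rw [← this, HahnSeries.coeff_sum]

theorem OrdGE.tsum {ι : Type*} {f : ι → LK} {N : ℤ} (hf : ∀ i, OrdGE N (f i)) :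
    OrdGE N (∑' i, f i) := by
  by_cases h : Summable f
  · intro n hn
    obtain ⟨s, hs⟩ := coeff_hasSum h.hasSum n
    rw [hs s subset_rfl]
    exact Finset.sum_eq_zero fun i _ => hf i n hn
  · rw [tsum_eq_zero_of_not_summable h]; exact OrdGE.zero N

theorem eq_zero_of_ord {x : LK} (h : ∀ N, OrdGE N x) : x = 0 := by
  ext n; exact h (n+1) n (by omega)

/-- Series with nonnegative coefficients. -/
def NN (x : LK) : Prop := ∀ n, 0 ≤ x.coeff n

theorem NN.add {x y : LK} (hx : NN x) (hy : NN y) : NN (x + y) := fun n => by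
  rw [HahnSeries.coeff_add]; exact add_nonneg (hx n) (hy n)

theorem NN.mul {x y : LK} (hx : NN x) (hy : NN y) : NN (x * y) := fun n => by
  rw [HahnSeries.coeff_mul]; exact Finset.sum_nonneg fun i _ => mul_nonneg (hx _) (hy _)

theorem NN.zero : NN 0 := fun n => by simp

theorem NN.tsum {ι : Type*} {f : ι → LK} (hf : ∀ i, NN (f i)) : NN (∑' i, f i) := by
  by_cases h : Summable f
  · intro n
    obtain ⟨s, hs⟩ := coeff_hasSum h.hasSum n
    rw [hs s subset_rfl]
    exact Finset.sum_nonneg fun i _ => hf i n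
  · rw [tsum_eq_zero_of_not_summable h]; exact NN.zero

/-- the monomial `q ^ k` -/
noncomputable def q (k : ℤ) : LK := HahnSeries.single k 1

theorem q_add (a b : ℤ) : q (a + b) = q a * q b := by simp [q]
theorem q_zero : q 0 = 1 := rfl
theorem q_ne (a : ℤ) : q a ≠ 0 := by simp [q]
theorem q_neg (a : ℤ) : q (-a) = (q a)⁻¹ := by
  apply eq_inv_of_mul_eq_one_left; rw [← q_add]; simp [q_zero]
theorem q_sub (a b : ℤ) : q (a - b) = q a / q b := by
  rw [sub_eq_add_neg, q_add, q_neg]; rfl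
theorem q_pow (a : ℤ) (n : ℕ) : q a ^ n = q (n * a) := by
  induction n with
  | zero => simp [q_zero]
  | succ n ih => rw [pow_succ, ih, ← q_add]; congr 1; push_cast; ring
theorem coeff_q (a n : ℤ) : (q a).coeff n = if n = a then 1 else 0 := by
  rw [q, HahnSeries.coeff_single]; split_ifs <;> rfl
theorem ord_q (a : ℤ) : OrdGE a (q a) := by
  intro n hn; rw [coeff_q, if_neg (by omega)]
theorem NN.q (a : ℤ) : NN (q a) := by
  intro n; rw [coeff_q]; split_ifs <;> norm_num
theorem NN.one : NN 1 := by rw [← q_zero]; exact NN.q 0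
theorem ord_one : OrdGE 0 1 := by rw [← q_zero]; exact ord_q 0
theorem q_inj {a b : ℤ} (h : q a = q b) : a = b := by
  have := congrArg (fun x : LK => x.coeff a) h
  simp only [coeff_q] at this
  by_contra hne
  simp [hne] at this
theorem q_ne_one {a : ℤ} (h : a ≠ 0) : 1 - q a ≠ 0 := by
  rw [sub_ne_zero, ← q_zero]; intro h'; exact h (q_inj h').symm
theorem q_add_ne {a : ℤ} : 1 + q a ≠ 0 := by
  intro h
  have h1 : ((1 : LK) + q a).coeff 0 = 0 := by rw [h]; rfl
  rw [← q_zero] at h1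
  simp only [HahnSeries.coeff_add, coeff_q] at h1
  split_ifs at h1 <;> norm_num at h1

/-- `x ≥ q^s` coefficientwise. -/
def GE' (s : ℤ) (x : LK) : Prop := NN (x - q s)

theorem GE'.nn {s : ℤ} {x : LK} (h : GE' s x) : NN x := by
  have := NN.add h (NN.q s); simpa using this
theorem GE'.coeff {s : ℤ} {x : LK} (h : GE' s x) : 1 ≤ x.coeff s := by
  have := h s
  rw [HahnSeries.coeff_sub, coeff_q, if_pos rfl] at this
  linarith
theorem GE'.mul {s t : ℤ} {x y : LK} (hx : GE' s x) (hy : GE' t y) : GE' (s + t) (x * y) := by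
  have : x * y - q (s + t) = (x - q s) * y + q s * (y - q t) := by rw [q_add]; ring
  unfold GE'
  rw [this]
  exact (NN.mul hx hy.nn).add (NN.mul (NN.q s) hy)
theorem GE'.add {s : ℤ} {x y : LK} (hx : GE' s x) (hy : NN y) : GE' s (x + y) := by
  have : x + y - q s = (x - q s) + y := by ring
  unfold GE'
  rw [this]
  exact NN.add hx hy
theorem GE'.q (s : ℤ) : GE' s (q s) := by unfold GE'; rw [sub_self]; exact NN.zero
theorem GE'.tsum {ι : Type*} {f : ι → LK} (hs : Summable f) (hf : ∀ i, NN (f i)) (i : ι) {s : ℤ}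
    (hi : GE' s (f i)) : GE' s (∑' i, f i) := by
  classical
  rw [hs.tsum_eq_add_tsum_ite i]
  refine hi.add (NN.tsum fun j => ?_)
  split_ifs
  · exact NN.zero
  · exact hf j

theorem summable_geom {a : ℤ} (ha : 0 < a) : Summable (fun n : ℕ => q (a * n)) := by
  refine summable_LK _ (fun n => a * n) (fun n => ord_q _) fun N => ?_
  refine (Set.finite_Iio (N.toNat + 1)).subset fun n hn => ?_
  simp only [Set.mem_ofPred_eq, Set.mem_Iio] at *
  have : (n : ℤ) ≤ a * n := by nlinarith
  omega

theorem tsum_geom {a : ℤ} (ha : 0 < a) : (∑' n : ℕ, q (a * n)) = (1 - q a)⁻¹ := by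
  apply eq_inv_of_mul_eq_one_left
  have h := (summable_geom ha).tsum_eq_zero_add
  have h2 : (∑' n : ℕ, q (a * ((n + 1 : ℕ) : ℤ))) = q a * ∑' n : ℕ, q (a * n) := by
    rw [← tsum_mul_left]; congr 1; ext1 n; rw [← q_add]; congr 1; push_cast; ring
  rw [h2] at h
  simp only [Nat.cast_zero, mul_zero, q_zero] at h
  linear_combination h

theorem NN.inv_one_sub {a : ℤ} (ha : 0 < a) : NN (1 - OP.q a)⁻¹ := by
  rw [← tsum_geom ha]; exact NN.tsum fun n => NN.q _

theorem GE'.inv_one_sub {a : ℤ} (ha : 0 < a) : GE' 0 (1 - OP.q a)⁻¹ := by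
  rw [← tsum_geom ha]
  refine GE'.tsum (summable_geom ha) (fun n => NN.q _) 0 ?_
  simpa using GE'.q 0

end OP
end Part1

section Part2
open Filter Topology
namespace OP

/-- signed monomial `(-1)^n q^e` -/
noncomputable def mon (n e : ℤ) : LK := (-1 : LK) ^ n * q e

theorem neg_one_ne : (-1 : LK) ≠ 0 := by simp

theorem mon_mul (a b x y : ℤ) : mon a x * mon b y = mon (a + b) (x + y) := by
  unfold mon; rw [q_add, zpow_add₀ neg_one_ne]; ring
theorem mon_zero_left (x : ℤ) : mon 0 x = q x := by simp [mon]
theorem mon_congr {a b x y : ℤ} (h : Even (a - b)) (hx : x = y) : mon a x = mon b y := by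
  subst hx
  unfold mon
  congr 1
  have : a = (a - b) + b := by ring
  rw [this, zpow_add₀ neg_one_ne, h.neg_one_zpow, one_mul]
theorem mon_neg {a b x y : ℤ} (h : Odd (a - b)) (hx : x = y) : mon a x = - mon b y := by
  subst hx
  unfold mon
  have : a = (a - b) + b := by ring
  rw [this, zpow_add₀ neg_one_ne, h.neg_one_zpow]; ring
theorem q_mul_mon (a b x : ℤ) : q x * mon a b = mon a (x + b) := by
  rw [← mon_zero_left, mon_mul]; simp
theorem ord_intCast_mul {N : ℤ} {x : LK} (hx : OrdGE N x) (k : ℤ) : OrdGE N ((k : LK) * x) := by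
  have h : OrdGE 0 (k : LK) := by
    intro n hn
    have : ((k : LK)) = HahnSeries.single 0 (k : ℚ) := by
      rw [← HahnSeries.C_apply]; simp
    rw [this, HahnSeries.coeff_single, if_neg (by omega)]
  simpa using h.mul hx
theorem ord_mon (n e : ℤ) : OrdGE e (mon n e) := by
  rcases Int.even_or_odd n with h | h
  · unfold mon; rw [h.neg_one_zpow, one_mul]; exact ord_q e
  · unfold mon; rw [h.neg_one_zpow, neg_one_mul]; exact (ord_q e).neg

/-- sign function of indefinite sums -/
def sgZ (n r : ℤ) : ℤ := (if 0 ≤ n then 1 else 0) - (if r < 0 then 1 else 0)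

noncomputable def sg (n r : ℤ) : LK := (sgZ n r : ℤ)

theorem summable_quad {ι : Type*} (f : ι → LK) (w : ι → ℤ)
    (hw : ∀ i, OrdGE (w i) (f i)) (g : ι → ℤ × ℤ) (hg : Function.Injective g) (B : ℤ)
    (h : ∀ i, |(g i).1| + |(g i).2| ≤ w i + B) : Summable f := by
  refine summable_LK f w hw fun N => ?_
  have hf : (Set.Icc (-(N + B)) (N + B) ×ˢ Set.Icc (-(N + B)) (N + B)).Finite :=
    (Set.finite_Icc _ _).prod (Set.finite_Icc _ _)
  refine (hf.preimage hg.injOn).subset fun i hi => ?_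
  have h1 := h i
  have hi' : w i < N := hi
  have := abs_nonneg (g i).1
  have := abs_nonneg (g i).2
  have h3 : |(g i).1| ≤ N + B := by linarith
  have h4 : |(g i).2| ≤ N + B := by linarith
  exact ⟨abs_le.1 h3, abs_le.1 h4⟩

theorem quad_bound (a n : ℤ) : |n| ≤ 5 * n * (n - 1) + a * n + (a ^ 2 + 36) := by
  rcases abs_cases n with ⟨h, h'⟩ | ⟨h, h'⟩ <;> rw [h]
  · nlinarith [sq_nonneg (2 * n + a - 3), sq_nonneg (n), sq_nonneg (n-3), sq_nonneg (n + a), sq_nonneg a, sq_nonneg (2*n+a-6)]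
  · nlinarith [sq_nonneg (2 * n + a - 4), sq_nonneg (n), sq_nonneg (n - 4), sq_nonneg (n + a), sq_nonneg a, sq_nonneg (2*n+a-4)]

/-- exponent of theta series -/
def qe (a n : ℤ) : ℤ := 5 * n * (n - 1) + a * n

noncomputable def j (a : ℤ) : LK := ∑' n : ℤ, mon n (qe a n)
noncomputable def jt (a : ℤ) (n : ℤ) : LK := mon n (qe a n)

theorem sj (a : ℤ) : Summable (fun n : ℤ => mon n (qe a n)) := by
  refine summable_quad _ (fun n => qe a n) (fun n => ord_mon _ _) (fun n => (n, 0))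
    (fun x y h => by simpa using h) (a ^ 2 + 36) fun n => ?_
  simpa [qe] using quad_bound a n

/-- terms of the Appell-Lerch type sums -/
noncomputable def Lt (c b : ℤ) (p : ℤ × ℤ) : LK :=
  sg p.1 p.2 * mon p.1 (qe b p.1 + p.2 * (c + 10 * p.1))

noncomputable def Lf (c b : ℤ) : LK := ∑' p : ℤ × ℤ, Lt c b p

theorem sgZ_cases (n r : ℤ) : (0 ≤ n ∧ 0 ≤ r ∧ sgZ n r = 1) ∨ (n < 0 ∧ r < 0 ∧ sgZ n r = -1) ∨
    sgZ n r = 0 := by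
  unfold sgZ; split_ifs <;> omega

theorem ord_sg_mul (n r : ℤ) {w e : ℤ} {x : LK} (hx : OrdGE e x)
    (h1 : 0 ≤ n → 0 ≤ r → w ≤ e) (h2 : n < 0 → r < 0 → w ≤ e) : OrdGE w (sg n r * x) := by
  rcases sgZ_cases n r with ⟨a, b, c⟩ | ⟨a, b, c⟩ | c
  · exact ord_intCast_mul (hx.mono (h1 a b)) _
  · exact ord_intCast_mul (hx.mono (h2 a b)) _
  · simp only [sg, c, Int.cast_zero, zero_mul]; exact OrdGE.zero _

theorem sL {c : ℤ} (h0 : 0 < c) (h10 : c < 10) (b : ℤ) : Summable (Lt c b) := by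
  refine summable_quad _ (fun p => qe b p.1 + |p.2|) (fun p => ?_) id Function.injective_id
    (b ^ 2 + 36) fun p => ?_
  · refine ord_sg_mul _ _ (ord_mon _ _) (fun h1 h2 => ?_) (fun h1 h2 => ?_)
    · rw [abs_of_nonneg h2]; nlinarith [mul_nonneg h2 h1]
    · rw [abs_of_neg h2]; nlinarith [mul_nonneg (by omega : 0 ≤ -p.2) (by omega : 0 ≤ -1-p.1)]
  · have := quad_bound b p.1
    simp only [id, qe]; linarith

noncomputable def kt (s t : ℤ) (p : ℤ × ℤ) : LK := sg p.1 p.2 * q (10 * p.1 * p.2 + s * p.1 + t * p.2)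

noncomputable def kap (s t : ℤ) : LK := ∑' p : ℤ × ℤ, kt s t p

theorem sk {s t : ℤ} (h0 : 0 < s) (h10 : s < 10) (k0 : 0 < t) (k10 : t < 10) :
    Summable (kt s t) := by
  refine summable_quad _ (fun p => |p.1| + |p.2| - 10) (fun p => ?_) id Function.injective_id
    10 fun p => ?_
  · refine ord_sg_mul _ _ (ord_q _) (fun h1 h2 => ?_) (fun h1 h2 => ?_)
    · rw [abs_of_nonneg h2, abs_of_nonneg h1]; nlinarith [mul_nonneg h2 h1]
    · rw [abs_of_neg h2, abs_of_neg h1]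
      nlinarith [mul_nonneg (by omega : 0 ≤ -1-p.2) (by omega : 0 ≤ -1-p.1)]
  · simp

/-! symmetries of `j` -/
theorem j_refl (a : ℤ) : j (10 - a) = j a := by
  unfold j
  rw [← (Equiv.neg ℤ).tsum_eq]
  refine tsum_congr fun n => mon_congr ⟨-n, by simp; ring⟩ ?_
  simp only [Equiv.neg_apply, qe]; ring

theorem j_shift (a : ℤ) : q a * j (a + 10) = - j a := by
  unfold j
  rw [← tsum_mul_left, ← tsum_neg, ← (Equiv.addRight (-1 : ℤ)).tsum_eq]
  refine tsum_congr fun n => ?_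
  rw [q_mul_mon]
  refine mon_neg ⟨-1, by simp⟩ ?_
  simp only [Equiv.coe_addRight, qe]; ring

theorem j_zero : j 0 = 0 := by
  have h1 := j_refl 0
  have h2 := j_shift 0
  simp only [q_zero, one_mul, zero_add, sub_zero] at h1 h2
  rw [h1] at h2
  have h3 : (2 : LK) * j 0 = 0 := by linear_combination h2
  simpa using h3

theorem j_neg (a : ℤ) : q a * j (-a) = - j a := by
  rw [← j_refl (-a), ← j_shift a]; congr 2; ring

theorem L_refl (c b : ℤ) : Lf c b = q (20 - b - c) * Lf (10 - c) (30 - b) := by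
  unfold Lf
  rw [← tsum_mul_left]
  rw [← ((Equiv.subLeft (-1 : ℤ)).prodCongr (Equiv.subLeft (-1 : ℤ))).tsum_eq]
  refine tsum_congr fun p => ?_
  simp only [Lt, Equiv.prodCongr_apply, Prod.map, Equiv.subLeft_apply]
  have h1 : sg (-1 - p.1) (-1 - p.2) = - sg p.1 p.2 := by
    simp only [sg, sgZ]; rw [← Int.cast_neg]; congr 1; split_ifs <;> omega
  have h2 : mon (-1 - p.1) (qe b (-1 - p.1) + (-1 - p.2) * (c + 10 * (-1 - p.1))) =
      - (q (20 - b - c) * mon p.1 (qe (30 - b) p.1 + p.2 * (10 - c + 10 * p.1))) := by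
    rw [q_mul_mon]
    refine mon_neg ⟨-1 - p.1, by ring⟩ ?_
    unfold qe; ring
  rw [h1, h2]; ring

theorem L_shift {c : ℤ} (h0 : 0 < c) (h10 : c < 10) (b : ℤ) :
    Lf c b - q c * Lf c (b + 10) = j b := by
  have e : q c * Lf c (b + 10) = ∑' p : ℤ × ℤ, sg p.1 (p.2 - 1) *
      mon p.1 (qe b p.1 + p.2 * (c + 10 * p.1)) := by
    unfold Lf
    rw [← tsum_mul_left,
      ← ((Equiv.refl ℤ).prodCongr (Equiv.addRight (-1 : ℤ))).tsum_eq]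
    refine tsum_congr fun p => ?_
    simp only [Lt, Equiv.prodCongr_apply, Prod.map, Equiv.coe_addRight, Equiv.refl_apply]
    rw [mul_left_comm, q_mul_mon]
    congr 1
    unfold qe; congr 1; ring
  have s2 : Summable (fun p : ℤ × ℤ => sg p.1 (p.2 - 1) *
      mon p.1 (qe b p.1 + p.2 * (c + 10 * p.1))) := by
    rw [← ((Equiv.refl ℤ).prodCongr (Equiv.addRight (1 : ℤ))).summable_iff]
    refine ((sL h0 h10 (b + 10)).mul_left (q c)).congr fun p => ?_
    simp only [Lt, Equiv.prodCongr_apply, Prod.map, Equiv.coe_addRight, Equiv.refl_apply, Function.comp]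
    rw [mul_left_comm, q_mul_mon]
    unfold qe; congr 2 <;> ring
  rw [e, Lf, ← (sL h0 h10 b).tsum_sub s2]
  unfold j
  have inj : Function.Injective (fun n : ℤ => (n, (0 : ℤ))) := fun x y h => by simpa using h
  rw [← inj.tsum_eq]
  · refine tsum_congr fun n => ?_
    simp only [Lt, ← sub_mul, sg, sgZ]; simp
  · intro p hp
    by_contra h
    apply hp
    have : p.2 ≠ 0 := fun h' => h ⟨p.1, by ext <;> simp [h']⟩
    have hz : sgZ p.1 p.2 = sgZ p.1 (p.2 - 1) := by unfold sgZ; split_ifs <;> omega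
    simp [Lt, sg, hz]

/-- general terms in the triple sums -/
noncomputable def Tt (b b' d : ℤ) (p : ℤ × ℤ × ℤ) : LK :=
  mon (p.1 + p.2.1 - p.2.2) (qe b p.1 + qe b' p.2.1 - 5 * p.2.2 * (p.2.2 - 1) + d * p.2.2)

def e1 : ℤ × ℤ × ℤ ≃ ℤ × ℤ × ℤ where
  toFun p := (p.2.1, p.1 - p.2.2, p.2.2)
  invFun p := (p.2.1 + p.2.2, p.1, p.2.2)
  left_inv p := by ext <;> simp
  right_inv p := by ext <;> simp

def e2 : ℤ × ℤ × ℤ ≃ ℤ × ℤ × ℤ where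
  toFun p := (p.1, p.2.1 - p.2.2, p.2.2)
  invFun p := (p.1, p.2.1 + p.2.2, p.2.2)
  left_inv p := by ext <;> simp
  right_inv p := by ext <;> simp

def e3 : ℤ × ℤ × ℤ ≃ ℤ × ℤ × ℤ where
  toFun p := (p.2.1 + p.1 - p.2.2, p.2.2 - p.1 - 1, p.2.1 - p.2.2)
  invFun p := (p.1 - p.2.2, p.1 + p.2.1 + 1, p.1 - p.2.2 + p.2.1 + 1)
  left_inv p := by ext <;> simp <;> ring
  right_inv p := by ext <;> simp <;> ring

theorem term1 (c b b' : ℤ) (p : ℤ × ℤ × ℤ) :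
    mon (e1 p).1 (qe b' (e1 p).1) * Lt c b (e1 p).2 =
      sg (p.1 - p.2.2) p.2.2 * Tt b b' (c - b) p := by
  obtain ⟨N, m, r⟩ := p
  simp only [e1, Equiv.coe_fn_mk, Lt, Tt]
  rw [mul_left_comm, mon_mul]
  congr 1
  refine mon_congr ⟨0, by ring⟩ ?_
  unfold qe; ring

theorem term2 (c' b b' : ℤ) (p : ℤ × ℤ × ℤ) :
    mon (e2 p).1 (qe b (e2 p).1) * Lt c' b' (e2 p).2 =
      sg (p.2.1 - p.2.2) p.2.2 * Tt b b' (c' - b') p := by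
  obtain ⟨N, m, r⟩ := p
  simp only [e2, Equiv.coe_fn_mk, Lt, Tt]
  rw [mul_left_comm, mon_mul]
  congr 1
  refine mon_congr ⟨0, by ring⟩ ?_
  unfold qe; ring

theorem term3 {c b c' b' : ℤ} (h : c - b = c' - b') (p : ℤ × ℤ × ℤ) :
    q c' * (mon (e3 p).1 (qe (c + b') (e3 p).1) * kt c' (10 - c) (e3 p).2) =
      sg (p.2.2 - p.1 - 1) (p.2.1 - p.2.2) * Tt b b' (c - b) p := by
  obtain ⟨N, m, r⟩ := p
  simp only [e3, Equiv.coe_fn_mk, kt, Tt]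
  rw [← mon_zero_left (_ + _), mul_left_comm (mon _ _), mon_mul, mul_left_comm, q_mul_mon]
  congr 1
  refine mon_congr ⟨0, by ring⟩ ?_
  obtain rfl : c = c' - b' + b := by linarith
  unfold qe; ring

theorem jL1 {c b b' : ℤ} (c0 : 0 < c) (c10 : c < 10) :
    HasSum (fun p : ℤ × ℤ × ℤ => sg (p.1 - p.2.2) p.2.2 * Tt b b' (c - b) p) (j b' * Lf c b) := by
  have S1 := (sj b').hasSum.mul_of_nonarchimedean (sL c0 c10 b).hasSum
  have := e1.hasSum_iff.2 S1
  refine this.congr_fun ?_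
  intro p
  exact (term1 c b b' p).symm

theorem jL2 {c' b b' : ℤ} (c0 : 0 < c') (c10 : c' < 10) :
    HasSum (fun p : ℤ × ℤ × ℤ => sg (p.2.1 - p.2.2) p.2.2 * Tt b b' (c' - b') p)
      (j b * Lf c' b') := by
  have S1 := (sj b).hasSum.mul_of_nonarchimedean (sL c0 c10 b').hasSum
  have := e2.hasSum_iff.2 S1
  refine this.congr_fun ?_
  intro p
  exact (term2 c' b b' p).symm

theorem jk {c b c' b' : ℤ} (h : c - b = c' - b') (c0 : 0 < c) (c10 : c < 10) (c0' : 0 < c')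
    (c10' : c' < 10) :
    HasSum (fun p : ℤ × ℤ × ℤ => sg (p.2.2 - p.1 - 1) (p.2.1 - p.2.2) * Tt b b' (c - b) p)
      (q c' * (j (c + b') * kap c' (10 - c))) := by
  have S1 := ((sj (c + b')).hasSum.mul_of_nonarchimedean
    (sk c0' c10' (show 0 < 10 - c by omega) (by omega)).hasSum).mul_left (q c')
  have := e3.hasSum_iff.2 S1
  refine this.congr_fun ?_
  intro p
  exact (term3 h p).symm

theorem KEY {c b c' b' : ℤ} (h : c - b = c' - b') (c0 : 0 < c) (c10 : c < 10) (c0' : 0 < c')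
    (c10' : c' < 10) :
    j b' * Lf c b - j b * Lf c' b' = - (q c' * (j (c + b') * kap c' (10 - c))) := by
  have H1 := (jL1 (b := b) (b' := b') c0 c10).sub (jL2 (b := b) (b' := b') c0' c10')
  have H2 := (jk h c0 c10 c0' c10').neg
  refine H1.unique (H2.congr_fun fun p => ?_)
  rw [← h, ← sub_mul, ← neg_mul]
  congr 1
  simp only [sg, sgZ]
  rw [← Int.cast_sub, ← Int.cast_neg]
  congr 1
  split_ifs <;> omega

end OP
end Part2

section Part3
open Filter Topology
namespace OP

theorem ord_inv {a : ℤ} (ha : 0 < a) : OrdGE 0 (1 - q a)⁻¹ := by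
  rw [← tsum_geom ha]
  exact OrdGE.tsum fun n => (ord_q _).mono (by positivity)

theorem ord_mul0 {N : ℤ} {x y : LK} (hx : OrdGE N x) (hy : OrdGE 0 y) : OrdGE N (x * y) := by
  simpa using hx.mul hy

theorem GE'.mul0 {N : ℤ} {x y : LK} (hx : GE' N x) (hy : GE' 0 y) : GE' N (x * y) := by
  simpa using hx.mul hy

/-- `u b m = 1 / (q^b; q^10)_m` -/
noncomputable def u (b : ℤ) (m : ℕ) : LK := ∏ i ∈ Finset.range m, (1 - q (b + 10 * i))⁻¹

theorem u_zero (b : ℤ) : u b 0 = 1 := by simp [u]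
theorem u_succ (b : ℤ) (m : ℕ) : u b (m + 1) = u b m * (1 - q (b + 10 * m))⁻¹ := by
  rw [u, Finset.prod_range_succ]; rfl
theorem GE'.one : GE' 0 1 := by rw [← q_zero]; exact GE'.q 0
theorem GE'.u {b : ℤ} (hb : 0 < b) (m : ℕ) : GE' 0 (u b m) := by
  induction m with
  | zero => rw [u_zero]; exact GE'.one
  | succ m ih => rw [u_succ]; exact ih.mul0 (GE'.inv_one_sub (by positivity))
theorem ord_u {b : ℤ} (hb : 0 < b) (m : ℕ) : OrdGE 0 (u b m) := by
  induction m with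
  | zero => rw [u_zero]; exact ord_one
  | succ m ih => rw [u_succ]; exact ord_mul0 ih (ord_inv (by positivity))

/-- `1 / (R; R)_n` -/
noncomputable def ri (n : ℕ) : LK := u 10 n

theorem ri_zero : ri 0 = 1 := u_zero _
theorem ri_succ (n : ℕ) : ri (n + 1) * (1 - q (10 * (n + 1 : ℕ))) = ri n := by
  have h : (1 - q (10 * (n + 1 : ℕ))) ≠ 0 := q_ne_one (by positivity)
  have : (10 : ℤ) * (n + 1 : ℕ) = 10 + 10 * n := by push_cast; ring
  rw [this] at h ⊢
  rw [ri, u_succ, mul_assoc, inv_mul_cancel₀ h, mul_one]; rfl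
theorem ord_ri (n : ℕ) : OrdGE 0 (ri n) := ord_u (by norm_num) n
theorem GE'.ri (n : ℕ) : GE' 0 (ri n) := GE'.u (by norm_num) n


theorem summable_lin (f : ℕ → LK) (a : ℤ) (ha : 0 < a) (hf : ∀ n : ℕ, OrdGE (a * n) (f n)) :
    Summable f := by
  refine summable_quad f (fun n => a * n) hf (fun n => (n, 0)) (fun x y h => by simpa using h) 0
    fun n => ?_
  simp only [Nat.abs_cast, abs_zero, add_zero]
  nlinarith

noncomputable def e (a : ℤ) : LK := ∑' n : ℕ, q (a * n) * ri n
noncomputable def E (a : ℤ) : LK := ∑' n : ℕ, mon n (qe a n) * ri n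

theorem se {a : ℤ} (ha : 0 < a) : Summable (fun n : ℕ => q (a * n) * ri n) :=
  summable_lin _ a ha fun n => ord_mul0 (ord_q _) (ord_ri n)

theorem summable_qe (a : ℤ) (f : ℕ → LK) (hf : ∀ n : ℕ, OrdGE (qe a n) (f n)) : Summable f := by
  refine summable_quad f (fun n => qe a n) hf (fun n => (n, 0)) (fun x y h => by simpa using h)
    (a ^ 2 + 36) fun n => ?_
  simpa [qe] using quad_bound a n

theorem sE (a : ℤ) : Summable (fun n : ℕ => mon n (qe a n) * ri n) :=
  summable_qe a _ fun n => ord_mul0 (ord_mon _ _) (ord_ri n)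

theorem hE (a : ℤ) : HasSum (fun n : ℕ => mon n (qe a n) * ri n) (E a) := (sE a).hasSum

theorem e_step {a : ℤ} (ha : 0 < a) : e a * (1 - q a) = e (a + 10) := by
  have h1 : e a - e (a + 10) = q a * e a := by
    unfold e
    rw [← (se ha).tsum_sub (se (by omega : 0 < a + 10)),
      ((se ha).sub (se (by omega : 0 < a + 10))).tsum_eq_zero_add, ← tsum_mul_left]
    simp only [Nat.cast_zero, mul_zero, sub_self, zero_add]
    refine tsum_congr fun n => ?_
    rw [← ri_succ n, show (a + 10) * ((n + 1 : ℕ) : ℤ) = a + a * n + 10 * (n + 1 : ℕ) by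
      push_cast; ring, show a * ((n + 1 : ℕ) : ℤ) = a + a * n by push_cast; ring]
    simp only [q_add]; ring
  linear_combination h1

theorem E_step (a : ℤ) : E a = (1 - q a) * E (a + 10) := by
  have h1 : E a - E (a + 10) = - q a * E (a + 10) := by
    unfold E
    rw [← (sE a).tsum_sub (sE (a + 10)),
      ((sE a).sub (sE (a + 10))).tsum_eq_zero_add, ← tsum_mul_left]
    simp only [Nat.cast_zero, qe, mul_zero, sub_self, zero_add]
    refine tsum_congr fun n => ?_
    have m1 : mon ((n + 1 : ℕ) : ℤ) (5 * ((n + 1 : ℕ) : ℤ) * (((n + 1 : ℕ) : ℤ) - 1) +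
        (a + 10) * ((n + 1 : ℕ) : ℤ)) = mon ((n + 1 : ℕ) : ℤ)
        (5 * ((n + 1 : ℕ) : ℤ) * (((n + 1 : ℕ) : ℤ) - 1) + a * ((n + 1 : ℕ) : ℤ)) *
        q (10 * (n + 1 : ℕ)) := by
      rw [mul_comm _ (q _), q_mul_mon]; congr 1; ring
    have m2 : mon ((n + 1 : ℕ) : ℤ)
        (5 * ((n + 1 : ℕ) : ℤ) * (((n + 1 : ℕ) : ℤ) - 1) + a * ((n + 1 : ℕ) : ℤ)) =
        - (q a * mon n (5 * n * ((n : ℤ) - 1) + (a + 10) * n)) := by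
      rw [q_mul_mon]; refine mon_neg ⟨0, by push_cast; ring⟩ ?_
      push_cast; ring
    rw [m1, m2, ← ri_succ n]
    ring
  linear_combination h1

theorem tail_ord {f : ℕ → LK} (hs : Summable f) {N : ℤ} (h0 : f 0 = 1)
    (h : ∀ n : ℕ, OrdGE N (f (n + 1))) : OrdGE N ((∑' n, f n) - 1) := by
  rw [hs.tsum_eq_zero_add, h0, add_sub_cancel_left]
  exact OrdGE.tsum h

theorem e_ord {a : ℤ} (ha : 0 < a) : OrdGE a (e a - 1) := by
  refine tail_ord (se ha) (by simp [q_zero, ri_zero]) fun n => ?_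
  refine ord_mul0 ((ord_q _).mono ?_) (ord_ri _)
  push_cast; nlinarith

theorem E_ord {a : ℤ} (ha : 0 < a) : OrdGE a (E a - 1) := by
  refine tail_ord (sE a) (by simp [qe, mon_zero_left, q_zero, ri_zero]) fun n => ?_
  refine ord_mul0 ((ord_mon _ _).mono ?_) (ord_ri _)
  unfold qe; push_cast; nlinarith [mul_nonneg (Int.natCast_nonneg n) (Int.natCast_nonneg n), mul_nonneg ha.le (Int.natCast_nonneg n)]

theorem ord_one_mul {N : ℤ} (hN : 0 ≤ N) {x y : LK} (hx : OrdGE N (x - 1)) (hy : OrdGE N (y - 1)) :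
    OrdGE N (x * y - 1) := by
  have h1 : OrdGE 0 x := by
    have := (hx.mono hN).add ord_one
    simpa using this
  have : x * y - 1 = (y - 1) * x + (x - 1) := by ring
  rw [this]
  exact (ord_mul0 hy h1).add hx

theorem eq_one_of_inv (f : ℤ → LK) (hf : ∀ a, 0 < a → f a = f (a + 10))
    (ho : ∀ a, 0 < a → OrdGE a (f a - 1)) {a : ℤ} (ha : 0 < a) : f a = 1 := by
  have h1 : ∀ n : ℕ, f a = f (a + 10 * n) := by
    intro n
    induction n with
    | zero => simp
    | succ n ih => rw [ih, hf _ (by positivity)]; congr 1; push_cast; ring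
  rw [← sub_eq_zero]
  refine eq_zero_of_ord fun N => ?_
  rw [h1 N.toNat]
  exact (ho _ (by positivity)).mono (by omega)

theorem eE {a : ℤ} (ha : 0 < a) : e a * E a = 1 := by
  refine eq_one_of_inv (fun a => e a * E a) (fun a ha => ?_) (fun a ha => ?_) ha
  · show e a * E a = e (a + 10) * E (a + 10)
    rw [← e_step ha, E_step a]; ring
  · exact ord_one_mul ha.le (e_ord ha) (E_ord ha)

theorem E_ne {a : ℤ} (ha : 0 < a) : E a ≠ 0 := right_ne_zero_of_mul_eq_one (eE ha)

theorem E_u {b : ℤ} (hb : 0 < b) (m : ℕ) : E (b + 10 * m) = E b * u b m := by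
  induction m with
  | zero => simp [u_zero]
  | succ m ih =>
    have h := E_step (b + 10 * m)
    have hne : 1 - q (b + 10 * m) ≠ 0 := q_ne_one (by positivity)
    have h2 : b + 10 * ((m + 1 : ℕ) : ℤ) = b + 10 * m + 10 := by push_cast; ring
    rw [h2, u_succ, ← mul_assoc, ← ih, h, mul_comm (1 - _), mul_assoc, mul_inv_cancel₀ hne, mul_one]

theorem E_ri (r : ℕ) : E (10 * (r + 1)) = E 10 * ri r := by
  rw [ri, ← E_u (by norm_num)]; congr 1; ring

theorem E_nonpos (m : ℕ) : E (-(10 * m)) = 0 := by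
  induction m with
  | zero => rw [E_step]; simp [q_zero]
  | succ m ih => rw [E_step, show -(10 * ((m + 1 : ℕ) : ℤ)) + 10 = -(10 * m) by push_cast; ring, ih, mul_zero]

theorem JTP' {a : ℤ} (h0 : 0 < a) (h10 : a < 10) : j a * e (10 - a) = E 10 * E a := by
  have H := (sj a).hasSum.mul_of_nonarchimedean (se (show 0 < 10 - a by omega)).hasSum
  let ee : ℤ × ℕ ≃ ℤ × ℕ :=
    { toFun := fun p => (p.1 + p.2, p.2)
      invFun := fun p => (p.1 - p.2, p.2)
      left_inv := fun p => by ext <;> simp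
      right_inv := fun p => by ext <;> simp }
  have H2 := ee.hasSum_iff.2 H
  have H3 : HasSum (fun p : ℤ × ℕ => mon p.1 (qe a p.1) *
      (mon p.2 (qe (10 * (p.1 + 1)) p.2) * ri p.2)) (j a * e (10 - a)) := by
    refine H2.congr_fun fun p => ?_
    simp only [ee, Equiv.coe_fn_mk, Function.comp]
    rw [← mul_assoc, ← mul_assoc, mon_mul, mul_comm (mon _ _) (q _), q_mul_mon]
    congr 1
    refine mon_congr ⟨0, by ring⟩ ?_
    unfold qe; ring
  have H4 : HasSum (fun r : ℤ => mon r (qe a r) * E (10 * (r + 1))) (j a * e (10 - a)) := by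
    refine H3.prod_fiberwise fun r => ?_
    have h := hE (10 * (r + 1))
    exact h.mul_left (mon r (qe a r))
  rw [← H4.tsum_eq, show E a = ∑' n : ℕ, mon n (qe a n) * ri n from rfl, ← tsum_mul_left]
  have inj : Function.Injective (fun n : ℕ => (n : ℤ)) := Nat.cast_injective
  rw [← inj.tsum_eq]
  · refine tsum_congr fun n => ?_
    rw [E_ri]; ring
  · intro r hr
    by_contra h
    apply hr
    have hr0 : r < 0 := by
      by_contra h'
      exact h ⟨r.toNat, by simp; omega⟩
    have := E_nonpos (-(r + 1)).toNat
    rw [show -(10 * (((-(r + 1)).toNat : ℕ) : ℤ)) = 10 * (r + 1) by omega] at this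
    show mon r (qe a r) * E (10 * (r + 1)) = 0
    rw [this, mul_zero]

theorem JTP {a : ℤ} (h0 : 0 < a) (h10 : a < 10) : j a = E 10 * E a * E (10 - a) := by
  have h1 := JTP' h0 h10
  have h2 := eE (show 0 < 10 - a by omega)
  calc j a = j a * (e (10 - a) * E (10 - a)) := by rw [h2, mul_one]
    _ = _ := by rw [← mul_assoc, h1]

theorem j_ne {a : ℤ} (h0 : 0 < a) (h10 : a < 10) : j a ≠ 0 := by
  rw [JTP h0 h10]
  exact mul_ne_zero (mul_ne_zero (E_ne (by norm_num)) (E_ne h0)) (E_ne (by omega))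

/-- partial theta function -/
noncomputable def Th (a : ℤ) : LK := ∑' r : ℕ, mon r (qe a r)

theorem sTh (a : ℤ) : Summable (fun r : ℕ => mon r (qe a r)) :=
  summable_qe a _ fun n => ord_mon _ _

noncomputable def Psi (b : ℤ) (k : ℕ) : LK := ∑' n : ℕ, q (10 * n) * ri n * u b (k + n)

theorem sPsi {b : ℤ} (hb : 0 < b) (k : ℕ) : Summable (fun n : ℕ => q (10 * n) * ri n * u b (k + n)) :=
  summable_lin _ 10 (by norm_num) fun _ => ord_mul0 (ord_mul0 (ord_q _) (ord_ri _)) (ord_u hb _)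

theorem GE'.Psi {b : ℤ} (hb : 0 < b) (k : ℕ) : GE' 0 (Psi b k) := by
  refine GE'.tsum (sPsi hb k) (fun n => ?_) 0 ?_
  · exact (((NN.q _).mul (GE'.ri n).nn).mul (GE'.u hb _).nn)
  · simpa [q_zero, ri_zero] using GE'.u hb k

theorem ord_Psi {b : ℤ} (hb : 0 < b) (k : ℕ) : OrdGE 0 (Psi b k) := by
  refine OrdGE.tsum fun n => ?_
  exact ord_mul0 (ord_mul0 ((ord_q _).mono (by positivity)) (ord_ri n)) (ord_u hb _)

theorem one_expand (r : ℕ) : E 10 * (e (10 * (r + 1)) * ri r) = 1 := by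
  have := eE (show (0:ℤ) < 10 * (r + 1) by positivity)
  rw [E_ri] at this
  rw [← this]; ring

noncomputable def ThT (b : ℤ) (r n : ℕ) : LK :=
  mon r (qe b r) * (q (10 * (r + 1) * n) * ri n * ri r)

theorem sThT (b : ℤ) : Summable (Function.uncurry (ThT b)) := by
  refine summable_quad _ (fun p => qe b p.1 + p.2) (fun p => ?_)
    (fun p => ((p.1 : ℤ), (p.2 : ℤ))) (fun x y h => by
      simp only [Prod.mk.injEq, Nat.cast_inj] at h; ext <;> simp [h]) (b ^ 2 + 36) fun p => ?_
  · have := (ord_mon p.1 (qe b p.1)).mul (ord_mul0 (ord_mul0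
      (ord_q (10 * (p.1 + 1) * p.2)) (ord_ri p.2)) (ord_ri p.1))
    refine this.mono ?_
    nlinarith [mul_nonneg (Int.natCast_nonneg p.1) (Int.natCast_nonneg p.2)]
  · have := quad_bound b p.1
    simp only [qe, Nat.abs_cast] at *; linarith

theorem Th_eq {b : ℤ} (hb : 0 < b) (k : ℕ) : Th (b + 10 * k) = E 10 * E b * Psi b k := by
  have h1 : Th (b + 10 * k) = E 10 * ∑' r : ℕ, ∑' n : ℕ, ThT (b + 10 * k) r n := by
    rw [← tsum_mul_left, Th]
    refine tsum_congr fun r => ?_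
    unfold ThT
    rw [tsum_mul_left, tsum_mul_right]
    have := one_expand r
    unfold e at this
    linear_combination (- mon r (qe (b + 10 * k) r)) * this
  have h2 : ∑' r : ℕ, ∑' n : ℕ, ThT (b + 10 * k) r n = E b * Psi b k := by
    rw [← (sThT (b + 10 * k)).tsum_comm, Psi, ← tsum_mul_left]
    refine tsum_congr fun n => ?_
    have h3 := E_u hb (k + n)
    rw [show E b * (q (10 * n) * ri n * u b (k + n)) = q (10 * n) * ri n * (E b * u b (k + n)) by ring,
      ← h3, E, ← tsum_mul_left]
    refine tsum_congr fun r => ?_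
    unfold ThT
    have h4 : mon r (qe (b + 10 * ((k + n : ℕ) : ℤ)) r) * q (10 * n) =
        mon r (qe (b + 10 * k) r) * q (10 * (r + 1) * n) := by
      rw [mul_comm, q_mul_mon, mul_comm _ (q (10 * _ * _)), q_mul_mon]; congr 1; unfold qe; push_cast; ring
    linear_combination (- ri n * ri r) * h4
  rw [h1, h2]; ring

noncomputable def LpT (c b : ℤ) (k n : ℕ) : LK := q (c * k) * mon n (qe (b + 10 * k) n)

noncomputable def Lp (c b : ℤ) : LK := ∑' k : ℕ, q (c * k) * Th (b + 10 * k)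

theorem sLpT {c : ℤ} (hc : 0 < c) (b : ℤ) : Summable (fun p : ℕ × ℕ => LpT c b p.1 p.2) := by
  refine summable_quad _ (fun p => qe b p.2 + p.1) (fun p => ?_)
    (fun p => ((p.1 : ℤ), (p.2 : ℤ))) (fun x y h => by
      simp only [Prod.mk.injEq, Nat.cast_inj] at h; ext <;> simp [h]) (b ^ 2 + 36) fun p => ?_
  · refine ((ord_q _).mul (ord_mon _ _)).mono ?_
    unfold qe
    nlinarith [mul_nonneg (Int.natCast_nonneg p.1) (Int.natCast_nonneg p.2),
      mul_le_mul_of_nonneg_right (show 1 ≤ c from hc) (Int.natCast_nonneg p.1)]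
  · have := quad_bound b p.2
    simp only [qe, Nat.abs_cast] at *; linarith

theorem Lp_eq {c : ℤ} (hc : 0 < c) (b : ℤ) : ∑' p : ℕ × ℕ, LpT c b p.1 p.2 = Lp c b := by
  rw [(sLpT hc b).tsum_prod, Lp]
  refine tsum_congr fun k => ?_
  simp only [LpT]
  rw [tsum_mul_left, Th]

theorem L_split {c : ℤ} (c0 : 0 < c) (c10 : c < 10) (b : ℤ) :
    Lf c b = Lp c b + q (20 - b - c) * Lp (10 - c) (30 - b) := by
  have S := sL c0 c10 b
  let s : Set (ℤ × ℤ) := {p | 0 ≤ p.1}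
  have h1 : Lf c b = (∑' p, s.indicator (Lt c b) p) + ∑' p, sᶜ.indicator (Lt c b) p := by
    rw [← (S.indicator s).tsum_add (S.indicator sᶜ), Lf]
    refine tsum_congr fun p => ?_
    exact (Set.indicator_self_add_compl_apply s (Lt c b) p).symm
  rw [h1, ← Lp_eq c0, ← Lp_eq (by omega : 0 < 10 - c), ← tsum_mul_left]
  congr 1
  · have inj : Function.Injective (fun p : ℕ × ℕ => ((p.2 : ℤ), (p.1 : ℤ))) := fun x y h => by
      simp only [Prod.mk.injEq, Nat.cast_inj] at h; ext <;> simp [h]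
    rw [← inj.tsum_eq]
    · refine tsum_congr fun p => ?_
      rw [Set.indicator_of_mem (by simp [s])]
      simp only [Lt, LpT]
      rw [show sg p.2 p.1 = 1 by simp [sg, sgZ], one_mul, q_mul_mon]
      congr 1; unfold qe; ring
    · intro p hp
      rw [Function.mem_support] at hp
      have h2 : p ∈ s := Set.mem_of_indicator_ne_zero hp
      rw [Set.indicator_of_mem h2] at hp
      have h2' : 0 ≤ p.1 := h2
      have h3 : sgZ p.1 p.2 ≠ 0 := fun h => hp (by simp [Lt, sg, h])
      have h4 : 0 ≤ p.2 := by
        unfold sgZ at h3; split_ifs at h3 <;> omega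
      exact ⟨(p.2.toNat, p.1.toNat), by ext <;> simp <;> omega⟩
  · have inj : Function.Injective (fun p : ℕ × ℕ => (-1 - (p.2 : ℤ), -1 - (p.1 : ℤ))) :=
      fun x y h => by
        simp only [Prod.mk.injEq] at h; ext <;> omega
    rw [← inj.tsum_eq]
    · refine tsum_congr fun p => ?_
      rw [Set.indicator_of_mem (by simp only [s, Set.mem_compl_iff, Set.mem_ofPred_eq]; omega)]
      simp only [Lt, LpT]
      rw [show sg (-1 - p.2) (-1 - p.1) = -1 by
        simp only [sg, sgZ]; rw [if_neg (by omega), if_pos (by omega)]; simp, neg_one_mul, q_mul_mon,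
        q_mul_mon, neg_eq_iff_eq_neg]
      refine mon_neg ⟨-1 - p.2, by ring⟩ ?_
      unfold qe; ring
    · intro p hp
      rw [Function.mem_support] at hp
      have h2 : p ∈ sᶜ := Set.mem_of_indicator_ne_zero hp
      rw [Set.indicator_of_mem h2] at hp
      have h2' : p.1 < 0 := by simpa [s] using h2
      have h3 : sgZ p.1 p.2 ≠ 0 := fun h => hp (by simp [Lt, sg, h])
      have h4 : p.2 < 0 := by
        unfold sgZ at h3; split_ifs at h3 <;> omega
      exact ⟨((-1 - p.2).toNat, (-1 - p.1).toNat), by ext <;> simp <;> omega⟩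

/-- weighted positive sums -/
noncomputable def Hs (c b : ℤ) (m : ℕ) : LK := ∑' k : ℕ, q (c * k) * Psi b (k + m)

theorem sHs {c b : ℤ} (hc : 0 < c) (hb : 0 < b) (m : ℕ) :
    Summable (fun k : ℕ => q (c * k) * Psi b (k + m)) :=
  summable_lin _ c hc fun _ => ord_mul0 (ord_q _) (ord_Psi hb _)

theorem GE'.Hs {c b : ℤ} (hc : 0 < c) (hb : 0 < b) (m k : ℕ) : GE' (c * k) (Hs c b m) :=
  GE'.tsum (sHs hc hb m) (fun _ => (NN.q _).mul (GE'.Psi hb _).nn) k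
    ((GE'.q _).mul0 (GE'.Psi hb _))

theorem Lp_Hs {c b : ℤ} (hb : 0 < b) (m : ℕ) : Lp c (b + 10 * m) = E 10 * E b * Hs c b m := by
  unfold Lp Hs
  rw [← tsum_mul_left]
  refine tsum_congr fun k => ?_
  have := Th_eq hb (k + m)
  rw [show b + 10 * (m : ℤ) + 10 * k = b + 10 * ((k + m : ℕ) : ℤ) by push_cast; ring, this]; ring

/-- `L(c,b)/j(b)` -/
noncomputable def HH (c b : ℤ) : LK := e (10 - b) * Hs c b 0 + q (20 - b - c) * (e b * Hs (10 - c) (10 - b) 2)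

theorem L_HH {c b : ℤ} (c0 : 0 < c) (c10 : c < 10) (b0 : 0 < b) (b10 : b < 10) :
    Lf c b = j b * HH c b := by
  have h1 := Lp_Hs (c := c) b0 0
  have h2 := Lp_Hs (c := 10 - c) (show 0 < 10 - b by omega) 2
  rw [show 10 - b + 10 * ((2 : ℕ) : ℤ) = 30 - b by push_cast; ring] at h2
  simp only [Nat.cast_zero, mul_zero, add_zero] at h1
  rw [L_split c0 c10, h1, h2, HH, JTP b0 b10]
  have h3 := eE b0
  have h4 := eE (show 0 < 10 - b by omega)
  linear_combination (- E 10 * E b * Hs c b 0) * h4 +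
    (- q (20 - b - c) * E 10 * E (10 - b) * Hs (10 - c) (10 - b) 2) * h3

theorem GE'.e {a : ℤ} (ha : 0 < a) (k : ℕ) : GE' (a * k) (e a) :=
  GE'.tsum (se ha) (fun n => (NN.q _).mul (GE'.ri n).nn) k ((GE'.q _).mul0 (GE'.ri k))

theorem GE'.HH {c b : ℤ} (c0 : 0 < c) (c10 : c < 10) (b0 : 0 < b) (b10 : b < 10) (k l : ℕ) :
    GE' ((10 - b) * l + c * k) (HH c b) := by
  refine GE'.add ?_ ?_
  · exact (GE'.e (by omega) l).mul (GE'.Hs c0 b0 0 k)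
  · exact (NN.q _).mul ((GE'.e b0 0).nn.mul (GE'.Hs (by omega) (by omega) 2 0).nn)

noncomputable def MM (c : ℤ) : LK := Hs c 10 0 + q (10 - c) * Hs (10 - c) 10 1

theorem L_MM {c : ℤ} (c0 : 0 < c) (c10 : c < 10) : Lf c 10 = E 10 * E 10 * MM c := by
  have h1 := Lp_Hs (c := c) (show (0:ℤ) < 10 by norm_num) 0
  have h2 := Lp_Hs (c := 10 - c) (show (0:ℤ) < 10 by norm_num) 1
  norm_num at h1 h2
  rw [L_split c0 c10, show (30:ℤ) - 10 = 20 by norm_num, h1, h2, MM]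
  rw [show 20 - 10 - c = 10 - c by ring]
  ring

theorem GE'.MM {c : ℤ} (c0 : 0 < c) (c10 : c < 10) (k : ℕ) : GE' (c * k) (MM c) :=
  GE'.add (GE'.Hs c0 (by norm_num) 0 k) ((NN.q _).mul (GE'.Hs (by omega) (by norm_num) 1 0).nn)

noncomputable def GG (y b : ℤ) : LK := ∑' m : ℕ, q (b * m) * e (y + 10 * m) * ri m

theorem ord_e {a : ℤ} (ha : 0 < a) : OrdGE 0 (e a) :=
  OrdGE.tsum fun n => ord_mul0 ((ord_q _).mono (by positivity)) (ord_ri n)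

theorem sG {y b : ℤ} (hy : 0 < y) (hb : 0 < b) :
    Summable (fun m : ℕ => q (b * m) * e (y + 10 * m) * ri m) :=
  summable_lin _ b hb fun m => ord_mul0 (ord_mul0 (ord_q _) (ord_e (by positivity))) (ord_ri m)

theorem GE'.GG {y b : ℤ} (hy : 0 < y) (hb : 0 < b) : GE' 0 (GG y b) := by
  refine GE'.tsum (sG hy hb) (fun m => ((NN.q _).mul (GE'.e (by positivity) 0).nn).mul
    (GE'.ri m).nn) 0 ?_
  have := (((GE'.q (b * (0 : ℕ))).mul (GE'.e (a := y + 10 * (0 : ℕ)) (by simpa using hy) 0)).mul0 (GE'.ri 0))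
  simpa using this

theorem G_step {y b : ℤ} (hy : 0 < y) (hb : 0 < b) :
    GG y b * (1 - q b) = (1 - q (y + b)) * GG y (b + 10) := by
  have hb' : 0 < b + 10 := by omega
  have h1 : GG y b - GG y (b + 10) = q b * (GG y b - q y * GG y (b + 10)) := by
    unfold GG
    rw [← tsum_mul_left (a := q y), ← (sG hy hb).tsum_sub (sG hy hb'),
      ← (sG hy hb).tsum_sub ((sG hy hb').mul_left _),
      ((sG hy hb).sub (sG hy hb')).tsum_eq_zero_add, ← tsum_mul_left]
    simp only [Nat.cast_zero, mul_zero, sub_self, zero_add]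
    refine tsum_congr fun m => ?_
    have he := e_step (show 0 < y + 10 * (m : ℤ) by positivity)
    rw [← ri_succ m, show (b + 10) * ((m + 1 : ℕ) : ℤ) = b + b * m + 10 * (m + 1 : ℕ) by
      push_cast; ring, show b * ((m + 1 : ℕ) : ℤ) = b + b * m by push_cast; ring,
      show y + 10 * ((m + 1 : ℕ) : ℤ) = y + 10 * m + 10 by push_cast; ring, ← he,
      show (b + 10) * (m : ℤ) = b * m + 10 * m by ring]
    simp only [q_add]; ring
  rw [q_add]
  linear_combination h1

theorem G_eq {y b : ℤ} (hy : 0 < y) (hb : 0 < b) : GG y b = e y * e b * E (y + b) := by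
  have key : GG y b * E y * (E b * e (y + b)) = 1 := by
    refine eq_one_of_inv (fun b => GG y b * E y * (E b * e (y + b))) (fun b hb => ?_)
      (fun b hb => ?_) hb
    · have h1 := G_step hy hb
      have h2 := e_step (show 0 < y + b by omega)
      have h3 := E_step b
      show GG y b * E y * (E b * e (y + b)) = GG y (b + 10) * E y * (E (b + 10) * e (y + (b + 10)))
      rw [show y + (b + 10) = y + b + 10 by ring, ← h2, h3]
      linear_combination (E y * E (b + 10) * e (y + b)) * h1
    · refine ord_one_mul hb.le ?_ (ord_one_mul hb.le (E_ord hb) ((e_ord (by omega)).mono (by omega)))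
      have h0 : GG y b * E y - 1 = (∑' m : ℕ, q (b * m) * e (y + 10 * m) * ri m * E y) - 1 := by
        rw [tsum_mul_right]; rfl
      rw [h0]
      have oE : OrdGE 0 (E y) := by
        have := ((E_ord hy).mono hy.le).add ord_one
        simpa using this
      refine tail_ord ((sG hy hb).mul_right _) ?_ fun m => ?_
      · simp only [Nat.cast_zero, mul_zero, q_zero, ri_zero, one_mul, mul_one, add_zero, eE hy]
      · refine ord_mul0 (ord_mul0 (ord_mul0 ((ord_q _).mono ?_) (ord_e (by positivity))) (ord_ri _)) oE
        push_cast; nlinarith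
  have h1 := eE hy
  have h2 := eE hb
  have h3 := eE (show 0 < y + b by omega)
  have : GG y b = (GG y b * E y * (E b * e (y + b))) * (e y * e b * E (y + b)) := by
    calc GG y b = GG y b * (e y * E y) * (e b * E b) * (e (y + b) * E (y + b)) := by
          rw [h1, h2, h3]; ring
      _ = _ := by ring
  rw [this, key, one_mul]

end OP
end Part3

section Part4
open Filter Topology
namespace OP

noncomputable def CC : LK := j 5 * Lf 5 10

theorem kap_symm (s t : ℤ) : kap s t = kap t s := by
  unfold kap
  rw [← (Equiv.prodComm ℤ ℤ).tsum_eq]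
  refine tsum_congr fun p => ?_
  simp only [kt, Equiv.prodComm_apply, Prod.swap]
  congr 1
  · simp only [sg, sgZ]; congr 1; split_ifs <;> omega
  · congr 1; ring

theorem K0 {s t : ℤ} (s0 : 0 < s) (s10 : s < 10) (t0 : 0 < t) (t10 : t < 10) :
    j (s + t) * Lf s 10 = j t * kap s t := by
  have h := KEY (c := 10 - t) (b := 10 - t - s) (c' := s) (b' := 0) (by ring) (by omega) (by omega)
    s0 s10
  have h2 := L_shift s0 s10 0
  rw [j_zero] at h h2
  rw [show 10 - t - s = 10 - (s + t) by ring, j_refl, show 10 - t + 0 = 10 - t by ring, j_refl,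
    show 10 - (10 - t) = t by ring] at h
  rw [zero_add] at h2
  have hq := q_ne s
  have : q s * (j (s + t) * Lf s 10 - j t * kap s t) = 0 := by
    linear_combination (-1 : LK) * h - j (s + t) * h2
  rcases mul_eq_zero.1 this with h | h
  · exact absurd h hq
  · exact sub_eq_zero.1 h

theorem C_eq {s : ℤ} (s0 : 0 < s) (s10 : s < 10) : j s * Lf s 10 = CC := by
  unfold CC
  rcases eq_or_ne s 5 with rfl | hs
  · rfl
  have h1 := K0 s0 s10 (show (0:ℤ) < 5 by norm_num) (by norm_num)
  have h2 := K0 (show (0:ℤ) < 5 by norm_num) (by norm_num) s0 s10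
  rw [kap_symm 5 s, add_comm 5 s] at h2
  have hne : j (s + 5) ≠ 0 := by
    by_cases h : s < 5
    · exact j_ne (by omega) (by omega)
    · have h3 := j_shift (s - 5)
      have h4 : j (s - 5) ≠ 0 := j_ne (by omega) (by omega)
      intro h5
      rw [show s - 5 + 10 = s + 5 by ring, h5] at h3
      simp at h3
      exact h4 h3
  have : j (s + 5) * (j s * Lf s 10 - j 5 * Lf 5 10) = 0 := by
    linear_combination (j s) * h1 - j 5 * h2
  rcases mul_eq_zero.1 this with h | h
  · exact absurd h hne
  · exact sub_eq_zero.1 h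

theorem GE'.ne {s : ℤ} {x : LK} (h : GE' s x) : x ≠ 0 := by
  rintro rfl
  have := h.coeff
  rw [HahnSeries.coeff_zero] at this
  norm_num at this

theorem CC_ne : CC ≠ 0 := by
  unfold CC
  rw [L_MM (by norm_num) (by norm_num)]
  have h1 := E_ne (show (0:ℤ) < 10 by norm_num)
  exact mul_ne_zero (j_ne (by norm_num) (by norm_num)) (mul_ne_zero (mul_ne_zero h1 h1)
    (GE'.ne (GE'.MM (by norm_num) (by norm_num) 0)))

theorem KEY' {c b c' b' : ℤ} (h : c - b = c' - b') (c0 : 0 < c) (c10 : c < 10) (c0' : 0 < c')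
    (c10' : c' < 10) :
    j c * j c' * (j b' * Lf c b - j b * Lf c' b') = - (q c' * j (c + b') * j (c - c') * CC) := by
  rw [KEY h c0 c10 c0' c10']
  have h1 := K0 c0' c10' (show 0 < 10 - c by omega) (by omega)
  rw [j_refl, show c' + (10 - c) = 10 - (c - c') by ring, j_refl] at h1
  have h2 := C_eq c0' c10'
  rw [← h2]
  linear_combination (q c' * j (c + b') * j c') * h1

/-- Weierstrass three term relation -/
theorem Wrel (c1 c2 c3 α : ℤ) (h1 : 0 < c1) (h1' : c1 < 10) (h2 : 0 < c2) (h2' : c2 < 10)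
    (h3 : 0 < c3) (h3' : c3 < 10) :
    q c2 * j (c1 + (c2 - α)) * j (c1 - c2) * j c3 * j (c3 - α) +
    q c3 * j (c2 + (c3 - α)) * j (c2 - c3) * j c1 * j (c1 - α) +
    q c1 * j (c3 + (c1 - α)) * j (c3 - c1) * j c2 * j (c2 - α) = 0 := by
  have k1 := KEY' (c := c1) (b := c1 - α) (c' := c2) (b' := c2 - α) (by ring) h1 h1' h2 h2'
  have k2 := KEY' (c := c2) (b := c2 - α) (c' := c3) (b' := c3 - α) (by ring) h2 h2' h3 h3'
  have k3 := KEY' (c := c3) (b := c3 - α) (c' := c1) (b' := c1 - α) (by ring) h3 h3' h1 h1'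
  refine (mul_eq_zero.1 ?_).resolve_left CC_ne
  linear_combination (j c3 * j (c3 - α)) * k1 + (j c1 * j (c1 - α)) * k2 + (j c2 * j (c2 - α)) * k3

/-! Lambert series -/
noncomputable def Lst (b : ℤ) (p : ℤ × ℤ) : LK := if p.1 = 0 then 0 else Lt 0 b p
noncomputable def Ls (b : ℤ) : LK := ∑' p : ℤ × ℤ, Lst b p
noncomputable def kst (s : ℤ) (p : ℤ × ℤ) : LK := if p.1 = 0 then 0 else kt s 0 p
noncomputable def ks (s : ℤ) : LK := ∑' p : ℤ × ℤ, kst s p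

theorem sLs (b : ℤ) : Summable (Lst b) := by
  refine summable_quad _ (fun p => qe b p.1 + |p.2|) (fun p => ?_) id Function.injective_id
    (b ^ 2 + 36) fun p => ?_
  · unfold Lst
    split_ifs with hp
    · exact OrdGE.zero _
    refine ord_sg_mul _ _ (ord_mon _ _) (fun h1 h2 => ?_) (fun h1 h2 => ?_)
    · rw [abs_of_nonneg h2]
      nlinarith [mul_nonneg h2 (by omega : 0 ≤ p.1 - 1)]
    · rw [abs_of_neg h2]; nlinarith [mul_nonneg (by omega : 0 ≤ -p.2) (by omega : 0 ≤ -1-p.1)]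
  · have := quad_bound b p.1
    simp only [id, qe]; linarith

theorem sks {s : ℤ} (h0 : 0 < s) (h10 : s < 10) : Summable (kst s) := by
  refine summable_quad _ (fun p => |p.1| + |p.2| - 10) (fun p => ?_) id Function.injective_id
    10 fun p => ?_
  · unfold kst
    split_ifs with hp
    · exact OrdGE.zero _
    refine ord_sg_mul _ _ (ord_q _) (fun h1 h2 => ?_) (fun h1 h2 => ?_)
    · rw [abs_of_nonneg h2, abs_of_nonneg h1]; nlinarith [mul_nonneg h2 (by omega : 0 ≤ p.1 - 1)]
    · rw [abs_of_neg h2, abs_of_neg h1]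
      nlinarith [mul_nonneg (by omega : 0 ≤ -1-p.2) (by omega : 0 ≤ -1-p.1)]
  · simp

noncomputable def th (a : ℤ) : LK := ∑' n : ℤ, (n : LK) * mon n (qe a n)

theorem sth (a : ℤ) : Summable (fun n : ℤ => (n : LK) * mon n (qe a n)) := by
  refine summable_quad _ (fun n => qe a n) (fun n => ord_intCast_mul (ord_mon _ _) _) (fun n => (n, 0))
    (fun x y h => by simpa using h) (a ^ 2 + 36) fun n => ?_
  simpa [qe] using quad_bound a n

theorem th_shift (a : ℤ) : q a * th (a + 10) = - (th a - j a) := by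
  unfold j th
  rw [← (sth a).tsum_sub (sj a), ← tsum_mul_left, ← tsum_neg, ← (Equiv.addRight (-1 : ℤ)).tsum_eq]
  refine tsum_congr fun n => ?_
  rw [mul_left_comm, q_mul_mon]
  have : mon ((Equiv.addRight (-1 : ℤ)) n) (a + qe (a + 10) ((Equiv.addRight (-1 : ℤ)) n)) =
      - mon n (qe a n) := by
    refine mon_neg ⟨-1, by simp⟩ ?_
    simp only [Equiv.coe_addRight, qe]; ring
  rw [this]
  simp only [Equiv.coe_addRight]; push_cast; ring

theorem th_refl (a : ℤ) : th (10 - a) = - th a := by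
  unfold th
  rw [← (Equiv.neg ℤ).tsum_eq, ← tsum_neg]
  refine tsum_congr fun n => ?_
  have : mon ((Equiv.neg ℤ) n) (qe (10 - a) ((Equiv.neg ℤ) n)) = mon n (qe a n) := by
    refine mon_congr ⟨-n, by simp; ring⟩ ?_
    simp only [Equiv.neg_apply, qe]; ring
  rw [this]; simp

def e3' : ℤ × ℤ × ℤ ≃ ℤ × ℤ × ℤ where
  toFun p := (p.2.1 + p.1 - p.2.2, p.2.2 - p.1, p.2.1 - p.2.2)
  invFun p := (p.1 - p.2.2, p.1 + p.2.1, p.1 - p.2.2 + p.2.1)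
  left_inv p := by ext <;> simp only [] <;> ring
  right_inv p := by ext <;> simp only [] <;> ring

theorem inner_sum (m : ℤ) (x : LK) :
    HasSum (fun r : ℤ => - sg (m - r) r * x) (- ((m : LK) + 1) * x) := by
  refine HasSum.mul_right x ?_
  by_cases hm : 0 ≤ m
  · have := hasSum_sum_of_ne_finset_zero (f := fun r : ℤ => - sg (m - r) r) (s := Finset.Icc 0 m)
      (L := .unconditional _) (fun r hr => by
        simp only [Finset.mem_Icc, not_and_or, not_le] at hr
        have : sgZ (m - r) r = 0 := by unfold sgZ; split_ifs <;> omega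
        simp [sg, this])
    suffices hs : ∑ r ∈ Finset.Icc 0 m, - sg (m - r) r = - ((m : LK) + 1) by
      rw [hs] at this; exact this
    rw [Finset.sum_congr rfl (g := fun _ => (-1 : LK))]
    · rw [Finset.sum_const, Int.card_Icc, nsmul_eq_mul]
      have : ((m + 1 - 0).toNat : LK) = ((m + 1 : ℤ) : LK) := by
        rw [← Int.cast_natCast, Int.toNat_of_nonneg (by omega)]; simp
      rw [this]; push_cast; ring
    · intro r hr
      simp only [Finset.mem_Icc] at hr
      have : sgZ (m - r) r = 1 := by unfold sgZ; split_ifs <;> omega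
      simp [sg, this]
  · have := hasSum_sum_of_ne_finset_zero (f := fun r : ℤ => - sg (m - r) r) (s := Finset.Icc (m + 1) (-1))
      (L := .unconditional _) (fun r hr => by
        simp only [Finset.mem_Icc, not_and_or, not_le] at hr
        have : sgZ (m - r) r = 0 := by unfold sgZ; split_ifs <;> omega
        simp [sg, this])
    suffices hs : ∑ r ∈ Finset.Icc (m + 1) (-1), - sg (m - r) r = - ((m : LK) + 1) by
      rw [hs] at this; exact this
    rw [Finset.sum_congr rfl (g := fun _ => (1 : LK))]
    · rw [Finset.sum_const, Int.card_Icc, nsmul_eq_mul]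
      have : ((-1 + 1 - (m + 1)).toNat : LK) = ((-1 + 1 - (m + 1) : ℤ) : LK) := by
        rw [← Int.cast_natCast, Int.toNat_of_nonneg (by omega)]
      rw [this]; push_cast; ring
    · intro r hr
      simp only [Finset.mem_Icc] at hr
      have : sgZ (m - r) r = -1 := by unfold sgZ; split_ifs <;> omega
      simp [sg, this]

theorem Lrel0 {b c' b' : ℤ} (h : b' = b + c') (c0' : 0 < c') (c10' : c' < 10) :
    j b' * Ls b - j b * Lf c' b' + j b' * ks c' = - (th b' + j b') := by
  have H1 : HasSum (fun p : ℤ × ℤ × ℤ => if p.1 = p.2.2 then 0 else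
      sg (p.1 - p.2.2) p.2.2 * Tt b b' (0 - b) p) (j b' * Ls b) := by
    have S1 := (sj b').hasSum.mul_of_nonarchimedean (sLs b).hasSum
    refine (e1.hasSum_iff.2 S1).congr_fun fun p => ?_
    rw [← term1]
    simp only [Lst, Function.comp]
    by_cases hp : p.1 = p.2.2
    · rw [if_pos hp, if_pos (by simp [e1, hp]), mul_zero]
    · rw [if_neg hp, if_neg (by simp [e1]; omega)]
  have H2 := jL2 (b := b) (b' := b') c0' c10'
  have H3 : HasSum (fun p : ℤ × ℤ × ℤ => if p.1 = p.2.2 then 0 else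
      sg (p.2.2 - p.1) (p.2.1 - p.2.2) * Tt b b' (0 - b) p) (j b' * ks c') := by
    have S1 := (sj b').hasSum.mul_of_nonarchimedean (sks c0' c10').hasSum
    refine (e3'.hasSum_iff.2 S1).congr_fun fun p => ?_
    obtain ⟨N, m, r⟩ := p
    simp only [kst, Function.comp]
    by_cases hp : N = r
    · rw [if_pos hp, if_pos (by simp [e3', hp]), mul_zero]
    · rw [if_neg hp, if_neg (by simp [e3']; omega)]
      simp only [e3', Equiv.coe_fn_mk, kt, Tt]
      rw [← mon_zero_left, mul_left_comm (mon _ _), mon_mul]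
      congr 1
      refine mon_congr ⟨0, by ring⟩ ?_
      subst h
      unfold qe; ring
  have H4 : HasSum (fun p : ℤ × ℤ × ℤ => if p.1 = p.2.2 then - sg (p.2.1 - p.2.2) p.2.2 *
      mon p.2.1 (qe b' p.2.1) else 0) (j b' * Ls b - j b * Lf c' b' + j b' * ks c') := by
    refine ((H1.sub H2).add H3).congr_fun fun p => ?_
    obtain ⟨N, m, r⟩ := p
    have hb : c' - b' = 0 - b := by rw [h]; ring
    simp only []
    rw [hb]
    by_cases hp : N = r
    · subst hp
      simp only [if_true, Tt]
      rw [show mon (N + m - N) (qe b N + qe b' m - 5 * N * (N - 1) + (0 - b) * N) =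
        mon m (qe b' m) from mon_congr ⟨0, by ring⟩ (by unfold qe; ring)]
      ring
    · simp only [if_neg hp]
      have : (sg (N - r) r - sg (m - r) r + sg (r - N) (m - r)) = 0 := by
        have hz : sgZ (N - r) r - sgZ (m - r) r + sgZ (r - N) (m - r) = 0 := by
          unfold sgZ; split_ifs <;> omega
        simp only [sg]
        rw [← Int.cast_sub, ← Int.cast_add, hz, Int.cast_zero]
      linear_combination (-Tt b b' (0 - b) (N, m, r)) * this
  have inj : Function.Injective (fun p : ℤ × ℤ => ((p.2, p.1, p.2) : ℤ × ℤ × ℤ)) := fun x y h => by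
    simp only [Prod.mk.injEq] at h; ext <;> simp [h]
  rw [← inj.hasSum_iff (fun p hp => by
    rw [if_neg]
    intro h'
    exact hp ⟨(p.2.1, p.2.2), by ext <;> simp [h']⟩)] at H4
  have H5 := H4.prod_fiberwise (g := fun m : ℤ => - ((m : LK) + 1) * mon m (qe b' m)) fun m => by
    have := inner_sum m (mon m (qe b' m))
    simpa [Function.comp] using this
  rw [← H5.tsum_eq]
  unfold th j
  rw [← (sth b').tsum_add (sj b'), ← tsum_neg]
  refine tsum_congr fun m => ?_
  ring

noncomputable def Lam (a : ℤ) : LK := th a / j a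

theorem th5 : th 5 = 0 := by
  have h := th_refl 5
  norm_num at h
  have h3 : (2 : LK) * th 5 = 0 := by linear_combination h
  simpa using h3

theorem ks5 : ks 5 = 0 := by
  have h : ks 5 = - ks 5 := by
    unfold ks
    rw [← tsum_neg, ← ((Equiv.neg ℤ).prodCongr (Equiv.subLeft (-1 : ℤ))).tsum_eq]
    refine tsum_congr fun p => ?_
    simp only [kst, kt, Equiv.prodCongr_apply, Prod.map, Equiv.subLeft_apply, Equiv.neg_apply]
    by_cases hp : p.1 = 0
    · simp [hp]
    · rw [if_neg hp, if_neg (by omega), ← neg_mul]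
      congr 1
      · simp only [sg, sgZ]; rw [← Int.cast_neg]; congr 1; split_ifs <;> omega
      · congr 1; ring
  have h3 : (2 : LK) * ks 5 = 0 := by linear_combination h
  simpa using h3

theorem ks_eq {c : ℤ} (c0 : 0 < c) (c10 : c < 10) : ks c = - Lam c := by
  have h1 := Lrel0 (b := 0) (c' := c) (b' := c) (by ring) c0 c10
  have h2 := Lrel0 (b := 0) (c' := 5) (b' := 5) (by ring) (by norm_num) (by norm_num)
  rw [j_zero] at h1 h2
  rw [th5, ks5] at h2
  have n5 : j 5 ≠ 0 := j_ne (by norm_num) (by norm_num)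
  have nc : j c ≠ 0 := j_ne c0 c10
  have h3 : Ls 0 = -1 := by
    have : j 5 * (Ls 0 + 1) = 0 := by linear_combination h2
    have := (mul_eq_zero.1 this).resolve_left n5
    linear_combination this
  rw [h3] at h1
  unfold Lam
  field_simp
  linear_combination h1

theorem Lrel {b c' b' : ℤ} (h : b' = b + c') (c0' : 0 < c') (c10' : c' < 10) (hb : j b' ≠ 0) :
    Ls b - j b / j b' * Lf c' b' = Lam c' - Lam b' - 1 := by
  have h1 := Lrel0 h c0' c10'
  rw [ks_eq c0' c10'] at h1
  rw [show Lam b' = th b' / j b' from rfl]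
  field_simp
  linear_combination h1

end OP
end Part4

section Part5
open Filter Topology
namespace OP

theorem q_eq (n : ℕ) : q (n : ℤ) = q 1 ^ n := by rw [q_pow]; simp

theorem j_up (a : ℤ) : j (a + 10) = - j a / q a := by
  rw [eq_div_iff (q_ne a), ← j_shift a]; ring
theorem j_dn (a : ℤ) : j (-a) = - j a / q a := by
  rw [eq_div_iff (q_ne a), ← j_neg a]; ring

theorem j6 : j 6 = j 4 := by simpa using j_refl 4
theorem j7 : j 7 = j 3 := by simpa using j_refl 3
theorem j8 : j 8 = j 2 := by simpa using j_refl 2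
theorem j9 : j 9 = j 1 := by simpa using j_refl 1
theorem j10 : j 10 = 0 := by have := j_refl 0; simp only [sub_zero] at this; rw [this, j_zero]
theorem q2 : q 2 = q 1 ^ 2 := by simpa using q_eq 2
theorem q3 : q 3 = q 1 ^ 3 := by simpa using q_eq 3
theorem q4 : q 4 = q 1 ^ 4 := by simpa using q_eq 4
theorem q5 : q 5 = q 1 ^ 5 := by simpa using q_eq 5
theorem q6 : q 6 = q 1 ^ 6 := by simpa using q_eq 6
theorem q7 : q 7 = q 1 ^ 7 := by simpa using q_eq 7
theorem q8 : q 8 = q 1 ^ 8 := by simpa using q_eq 8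
theorem q9 : q 9 = q 1 ^ 9 := by simpa using q_eq 9
theorem q11 : q 11 = q 1 ^ 11 := by simpa using q_eq 11
theorem q13 : q 13 = q 1 ^ 13 := by simpa using q_eq 13
theorem j11 : j 11 = - j 1 / q 1 := by simpa using j_up 1
theorem j12 : j 12 = - j 2 / q 1 ^ 2 := by rw [← q2]; simpa using j_up 2
theorem j13 : j 13 = - j 3 / q 1 ^ 3 := by rw [← q3]; simpa using j_up 3
theorem j14 : j 14 = - j 4 / q 1 ^ 4 := by rw [← q4]; simpa using j_up 4
theorem j15 : j 15 = - j 5 / q 1 ^ 5 := by rw [← q5]; simpa using j_up 5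
theorem j16 : j 16 = - j 4 / q 1 ^ 6 := by rw [← q6, ← j6]; simpa using j_up 6
theorem j17 : j 17 = - j 3 / q 1 ^ 7 := by rw [← q7, ← j7]; simpa using j_up 7
theorem j18 : j 18 = - j 2 / q 1 ^ 8 := by rw [← q8, ← j8]; simpa using j_up 8
theorem j19 : j 19 = - j 1 / q 1 ^ 9 := by rw [← q9, ← j9]; simpa using j_up 9
theorem j21 : j 21 = j 1 / q 1 ^ 12 := by
  have := j_up 11; norm_num at this; rw [this, j11, q11]; field_simp
theorem j23 : j 23 = j 3 / q 1 ^ 16 := by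
  have := j_up 13; norm_num at this; rw [this, j13, q13]; field_simp
theorem jm1 : j (-1) = - j 1 / q 1 := by simpa using j_dn 1
theorem jm2 : j (-2) = - j 2 / q 1 ^ 2 := by rw [← q2]; simpa using j_dn 2
theorem jm3 : j (-3) = - j 3 / q 1 ^ 3 := by rw [← q3]; simpa using j_dn 3
theorem jm4 : j (-4) = - j 4 / q 1 ^ 4 := by rw [← q4]; simpa using j_dn 4
theorem jm5 : j (-5) = - j 5 / q 1 ^ 5 := by rw [← q5]; simpa using j_dn 5
theorem jm6 : j (-6) = - j 4 / q 1 ^ 6 := by rw [← q6, ← j6]; simpa using j_dn 6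
theorem n1 : j 1 ≠ 0 := j_ne (by norm_num) (by norm_num)
theorem n2 : j 2 ≠ 0 := j_ne (by norm_num) (by norm_num)
theorem n3 : j 3 ≠ 0 := j_ne (by norm_num) (by norm_num)
theorem n4 : j 4 ≠ 0 := j_ne (by norm_num) (by norm_num)
theorem n5 : j 5 ≠ 0 := j_ne (by norm_num) (by norm_num)
theorem nx : q 1 ≠ 0 := q_ne 1

theorem L4_10 : Lf 4 10 = CC / j 4 := by
  rw [eq_div_iff n4, mul_comm]; exact C_eq (by norm_num) (by norm_num)
theorem L8_10 : Lf 8 10 = CC / j 2 := by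
  rw [eq_div_iff n2, mul_comm, ← j8]; exact C_eq (by norm_num) (by norm_num)
theorem L2_10 : Lf 2 10 = CC / j 2 := by
  rw [eq_div_iff n2, mul_comm]; exact C_eq (by norm_num) (by norm_num)
theorem L1_10 : Lf 1 10 = CC / j 1 := by
  rw [eq_div_iff n1, mul_comm]; exact C_eq (by norm_num) (by norm_num)

theorem k2_8 : Lf 2 8 = - q 1 ^ 2 * Lf 6 12 + CC * (j 4 / j 2 ^ 2) := by
  have h := KEY' (c := 2) (b := 8) (c' := 6) (b' := 12) (by norm_num) (by norm_num) (by norm_num) (by norm_num) (by norm_num)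
  norm_num at h
  rw [j6, j8, j12, j14, jm4, q6] at h
  have := n1; have := n2; have := n3; have := n4; have := n5; have := nx
  field_simp at h ⊢
  linear_combination (-1 : LK) * h
theorem k2_13 : Lf 2 13 = q 1 ^ 2 * (j 3 / j 5) * Lf 4 15 + CC * (j 3 / (j 4 * j 5)) := by
  have h := KEY' (c := 2) (b := 13) (c' := 4) (b' := 15) (by norm_num) (by norm_num) (by norm_num) (by norm_num) (by norm_num)
  norm_num at h
  rw [j13, j15, j17, jm2, q4] at h
  have := n1; have := n2; have := n3; have := n4; have := n5; have := nx
  field_simp at h ⊢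
  linear_combination (-1 : LK) * h
theorem k6_17 : q 1 ^ 3 * Lf 6 17 = q 1 * (j 3 / j 5) * Lf 4 15 + CC * (j 1 * j 2 / (j 4 ^ 2 * j 5)) := by
  have h := KEY' (c := 6) (b := 17) (c' := 4) (b' := 15) (by norm_num) (by norm_num) (by norm_num) (by norm_num) (by norm_num)
  norm_num at h
  rw [j6, j15, j17, j21, q4] at h
  have := n1; have := n2; have := n3; have := n4; have := n5; have := nx
  field_simp at h ⊢
  linear_combination (-1 : LK) * h
theorem k2_9 : Lf 2 9 = - q 1 ^ 5 * (j 1 / j 5) * Lf 8 15 + CC * (j 3 * j 4 / (j 2 ^ 2 * j 5)) := by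
  have h := KEY' (c := 2) (b := 9) (c' := 8) (b' := 15) (by norm_num) (by norm_num) (by norm_num) (by norm_num) (by norm_num)
  norm_num at h
  rw [j8, j9, j15, j17, jm6, q8] at h
  have := n1; have := n2; have := n3; have := n4; have := n5; have := nx
  field_simp at h ⊢
  linear_combination (-1 : LK) * h
theorem k4_11 : Lf 4 11 = q 1 ^ 4 * (j 1 / j 5) * Lf 8 15 + CC * (j 1 / (j 2 * j 5)) := by
  have h := KEY' (c := 4) (b := 11) (c' := 8) (b' := 15) (by norm_num) (by norm_num) (by norm_num) (by norm_num) (by norm_num)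
  norm_num at h
  rw [j8, j11, j15, j19, jm4, q8] at h
  have := n1; have := n2; have := n3; have := n4; have := n5; have := nx
  field_simp at h ⊢
  linear_combination (-1 : LK) * h
theorem k2_14 : Lf 2 14 = q 1 ^ 2 * Lf 4 16 + CC * (j 2 / j 4 ^ 2) := by
  have h := KEY' (c := 2) (b := 14) (c' := 4) (b' := 16) (by norm_num) (by norm_num) (by norm_num) (by norm_num) (by norm_num)
  norm_num at h
  rw [j14, j16, j18, jm2, q4] at h
  have := n1; have := n2; have := n3; have := n4; have := n5; have := nx
  field_simp at h ⊢
  linear_combination (-1 : LK) * h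
theorem k8_19 : q 1 ^ 7 * Lf 8 19 = q 1 ^ 3 * (j 1 / j 5) * Lf 4 15 + CC * (j 3 / (j 2 * j 5)) := by
  have h := KEY' (c := 8) (b := 19) (c' := 4) (b' := 15) (by norm_num) (by norm_num) (by norm_num) (by norm_num) (by norm_num)
  norm_num at h
  rw [j8, j15, j19, j23, q4] at h
  have := n1; have := n2; have := n3; have := n4; have := n5; have := nx
  field_simp at h ⊢
  linear_combination (-1 : LK) * h
theorem k6_13 : q 1 * Lf 6 13 = q 1 ^ 3 * (j 3 / j 5) * Lf 8 15 - CC * (j 1 / (j 4 * j 5)) := by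
  have h := KEY' (c := 6) (b := 13) (c' := 8) (b' := 15) (by norm_num) (by norm_num) (by norm_num) (by norm_num) (by norm_num)
  norm_num at h
  rw [j6, j8, j13, j15, j21, jm2, q8] at h
  have := n1; have := n2; have := n3; have := n4; have := n5; have := nx
  field_simp at h ⊢
  linear_combination (-1 : LK) * h
theorem k7_14 : q 1 ^ 2 * Lf 7 14 = q 1 ^ 3 * (j 4 / j 5) * Lf 8 15 - CC * (j 1 / (j 3 * j 5)) := by
  have h := KEY' (c := 7) (b := 14) (c' := 8) (b' := 15) (by norm_num) (by norm_num) (by norm_num) (by norm_num) (by norm_num)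
  norm_num at h
  rw [j7, j8, j14, j15, show (22:ℤ) = 12 + 10 by norm_num, j_up 12, j12, jm1, q8, show (12:ℤ) = ((12:ℕ):ℤ) by norm_num, q_eq] at h
  have := n1; have := n2; have := n3; have := n4; have := n5; have := nx
  field_simp at h ⊢
  linear_combination (-1 : LK) * h

/-! three term theta relations -/
theorem W4 : q 1 * j 1 ^ 3 * j 5 + j 1 * j 3 ^ 3 - j 2 ^ 3 * j 4 = 0 := by
  have h := Wrel 1 2 3 (-4) (by norm_num) (by norm_num) (by norm_num) (by norm_num) (by norm_num) (by norm_num)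
  norm_num at h
  rw [j6, j7, j8, j9, jm1, q2, q3] at h
  have := nx
  field_simp at h
  have h := (mul_eq_zero.1 h).resolve_left nx
  linear_combination (-1 : LK) * h
theorem Wa : q 1 * j 1 ^ 2 * j 2 * j 4 + j 1 * j 3 * j 4 ^ 2 - j 2 ^ 2 * j 3 * j 5 = 0 := by
  have h := Wrel 1 2 3 (-3) (by norm_num) (by norm_num) (by norm_num) (by norm_num) (by norm_num) (by norm_num)
  norm_num at h
  rw [j6, j7, j8, jm1, q2, q3] at h
  have := nx
  field_simp at h
  have h := (mul_eq_zero.1 h).resolve_left nx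
  linear_combination (-1 : LK) * h
theorem W2 : q 1 * j 1 ^ 2 * j 3 ^ 2 + j 1 * j 3 * j 5 ^ 2 - j 2 ^ 2 * j 4 ^ 2 = 0 := by
  have h := Wrel 1 2 3 (-2) (by norm_num) (by norm_num) (by norm_num) (by norm_num) (by norm_num) (by norm_num)
  norm_num at h
  rw [j6, j7, jm1, q2, q3] at h
  have := nx
  field_simp at h
  have h := (mul_eq_zero.1 h).resolve_left nx
  linear_combination (-1 : LK) * h
theorem Wb : q 1 * j 1 * j 2 ^ 2 * j 3 + j 1 * j 4 ^ 2 * j 5 - j 2 * j 3 ^ 2 * j 4 = 0 := by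
  have h := Wrel 1 2 4 (-2) (by norm_num) (by norm_num) (by norm_num) (by norm_num) (by norm_num) (by norm_num)
  norm_num at h
  rw [j6, j7, j8, jm1, jm2, q2, q4] at h
  have := nx
  field_simp at h
  have h := (mul_eq_zero.1 h).resolve_left nx
  linear_combination (-1 : LK) * h

end OP
end Part5

section Part6
open Filter Topology
namespace OP

/-! Lambert-type sums -/
theorem Lam_up {a : ℤ} (h : j a ≠ 0) : Lam (a + 10) = Lam a - 1 := by
  have h1 := th_shift a
  have h2 := j_shift a
  have hq := q_ne a
  have h3 : j (a + 10) ≠ 0 := by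
    intro h3; rw [h3] at h2; simp at h2; exact h h2
  unfold Lam
  rw [div_sub_one h, div_eq_div_iff h3 h]
  have : q a * (th (a + 10) * j a - (th a - j a) * j (a + 10)) = 0 := by
    linear_combination j a * h1 - (th a - j a) * h2
  exact sub_eq_zero.1 ((mul_eq_zero.1 this).resolve_left hq)
theorem Lam_refl (a : ℤ) : Lam (10 - a) = - Lam a := by
  unfold Lam; rw [th_refl, j_refl]; ring
theorem Lam5 : Lam 5 = 0 := by simp [Lam, th5]
theorem Lam6 : Lam 6 = - Lam 4 := by simpa using Lam_refl 4
theorem Lam7 : Lam 7 = - Lam 3 := by simpa using Lam_refl 3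
theorem Lam8 : Lam 8 = - Lam 2 := by simpa using Lam_refl 2
theorem Lam9 : Lam 9 = - Lam 1 := by simpa using Lam_refl 1
theorem Lam11 : Lam 11 = Lam 1 - 1 := by simpa using Lam_up n1
theorem Lam12 : Lam 12 = Lam 2 - 1 := by simpa using Lam_up n2
theorem Lam13 : Lam 13 = Lam 3 - 1 := by simpa using Lam_up n3
theorem Lam14 : Lam 14 = Lam 4 - 1 := by simpa using Lam_up n4
theorem Lam18 : Lam 18 = - Lam 2 - 1 := by rw [← Lam8]; simpa using Lam_up (a := 8) (by rw [j8]; exact n2)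
theorem Lam19 : Lam 19 = - Lam 1 - 1 := by rw [← Lam9]; simpa using Lam_up (a := 9) (by rw [j9]; exact n1)

theorem n11 : j 11 ≠ 0 := by rw [j11]; exact div_ne_zero (neg_ne_zero.2 n1) nx
theorem n12 : j 12 ≠ 0 := by rw [j12]; exact div_ne_zero (neg_ne_zero.2 n2) (pow_ne_zero _ nx)
theorem n13 : j 13 ≠ 0 := by rw [j13]; exact div_ne_zero (neg_ne_zero.2 n3) (pow_ne_zero _ nx)
theorem n14 : j 14 ≠ 0 := by rw [j14]; exact div_ne_zero (neg_ne_zero.2 n4) (pow_ne_zero _ nx)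
theorem n18 : j 18 ≠ 0 := by rw [j18]; exact div_ne_zero (neg_ne_zero.2 n2) (pow_ne_zero _ nx)
theorem n19 : j 19 ≠ 0 := by rw [j19]; exact div_ne_zero (neg_ne_zero.2 n1) (pow_ne_zero _ nx)

theorem Frel (c c' β : ℤ) (c0 : 0 < c) (c10 : c < 10) (c0' : 0 < c') (c10' : c' < 10)
    (h1 : j (β + c) ≠ 0) (h2 : j (β + c') ≠ 0) :
    Lam c - Lam (β + c) - Lam c' + Lam (β + c') =
      - (q c * CC * j β * j (c' + (β + c)) * j (c' - c)) / (j c' * j c * j (β + c') * j (β + c)) := by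
  have e1 := Lrel (b := β) (c' := c) (b' := β + c) rfl c0 c10 h1
  have e2 := Lrel (b := β) (c' := c') (b' := β + c') rfl c0' c10' h2
  have e3 := KEY' (c := c') (b := β + c') (c' := c) (b' := β + c) (by ring) c0' c10' c0 c10
  have := j_ne c0 c10
  have := j_ne c0' c10'
  rw [show Lam c - Lam (β + c) - Lam c' + Lam (β + c') = j β / j (β + c') * Lf c' (β + c') -
    j β / j (β + c) * Lf c (β + c) by linear_combination e2 - e1]
  rw [eq_div_iff (by simp [*])]
  field_simp
  linear_combination j β * e3

theorem F165 : 2 * Lam 1 + 2 * Lam 4 - 1 = - CC * (j 2 * j 5 ^ 2 / (j 1 ^ 2 * j 4 ^ 2)) := by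
  have h := Frel 1 6 5 (by norm_num) (by norm_num) (by norm_num) (by norm_num) (by norm_num; rw [j6]; exact n4) (by norm_num; exact n11)
  norm_num at h
  rw [Lam6, Lam11, j6, j11, j12] at h
  have := n1; have := n2; have := n3; have := n4; have := n5; have := nx
  field_simp at h ⊢
  linear_combination h
theorem F275 : 2 * Lam 2 + 2 * Lam 3 - 1 = - CC * (j 4 * j 5 ^ 2 / (j 2 ^ 2 * j 3 ^ 2)) := by
  have h := Frel 2 7 5 (by norm_num) (by norm_num) (by norm_num) (by norm_num) (by norm_num; rw [j7]; exact n3) (by norm_num; exact n12)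
  norm_num at h
  rw [Lam7, Lam12, j7, j12, j14, q2] at h
  have := n1; have := n2; have := n3; have := n4; have := n5; have := nx
  field_simp at h ⊢
  linear_combination h
theorem F121 : Lam 1 - 2 * Lam 2 + Lam 3 = - CC * (q 1 * j 1 * j 4 / (j 2 ^ 2 * j 3)) := by
  have h := Frel 1 2 1 (by norm_num) (by norm_num) (by norm_num) (by norm_num) (by norm_num; exact n2) (by norm_num; exact n3)
  norm_num at h
  have := n1; have := n2; have := n3; have := n4; have := n5; have := nx
  field_simp at h ⊢
  linear_combination h
theorem F123 : Lam 1 - Lam 4 - Lam 2 = - CC * (q 1 * j 3 / (j 2 * j 5)) := by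
  have h := Frel 1 2 3 (by norm_num) (by norm_num) (by norm_num) (by norm_num) (by norm_num; exact n4) (by norm_num; exact n5)
  norm_num at h
  rw [j6, Lam5] at h
  have := n1; have := n2; have := n3; have := n4; have := n5; have := nx
  field_simp at h ⊢
  linear_combination h

theorem l6 : Ls 6 + q 1 ^ 4 * Lf 8 14 = - Lam 2 - Lam 4 := by
  have h := Lrel (b := 6) (c' := 8) (b' := 14) (by norm_num) (by norm_num) (by norm_num) n14
  rw [Lam14, Lam8, j14, j6] at h
  have := n4; have := nx
  have e : j 4 / (- j 4 / q 1 ^ 4) = - q 1 ^ 4 := by field_simp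
  rw [e] at h
  linear_combination h
theorem l11 : Ls 11 - q 1 ^ 8 * Lf 8 19 = Lam 1 - Lam 2 := by
  have h := Lrel (b := 11) (c' := 8) (b' := 19) (by norm_num) (by norm_num) (by norm_num) n19
  rw [Lam19, Lam8, j19, j11] at h
  have := n1; have := nx
  have e : (- j 1 / q 1) / (- j 1 / q 1 ^ 9) = q 1 ^ 8 := by field_simp
  rw [e] at h
  linear_combination h
theorem l7 : Ls 7 + q 1 ^ 3 * Lf 6 13 = - Lam 4 - Lam 3 := by
  have h := Lrel (b := 7) (c' := 6) (b' := 13) (by norm_num) (by norm_num) (by norm_num) n13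
  rw [Lam13, Lam6, j13, j7] at h
  have := n3; have := nx
  have e : j 3 / (- j 3 / q 1 ^ 3) = - q 1 ^ 3 := by field_simp
  rw [e] at h
  linear_combination h
theorem l12 : Ls 12 - q 1 ^ 6 * Lf 6 18 = Lam 2 - Lam 4 := by
  have h := Lrel (b := 12) (c' := 6) (b' := 18) (by norm_num) (by norm_num) (by norm_num) n18
  rw [Lam18, Lam6, j18, j12] at h
  have := n2; have := nx
  have e : (- j 2 / q 1 ^ 2) / (- j 2 / q 1 ^ 8) = q 1 ^ 6 := by field_simp
  rw [e] at h
  linear_combination h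

/-! the five components -/
noncomputable def K1 : LK := q 1 * (Lf 4 10 + q 1 ^ 2 * Lf 4 15)
noncomputable def K4 : LK := Lf 8 10 + q 1 ^ 4 * Lf 8 15
noncomputable def D0 : LK := CC / (j 1 * j 2) - 3 * q 1 * CC / (j 3 * j 4)
noncomputable def D2 : LK := -2 * CC / (j 1 * j 4)
noncomputable def D3 : LK := 4 * CC / (j 2 * j 3)
noncomputable def D1 : LK := (6 * K1 + 2 * j 3 * D0 - 2 * j 1 * q 1 * D2) / j 5
noncomputable def D4 : LK := (-8 * K4 + 2 * j 3 * D3 - 2 * j 1 * D0) / j 5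

theorem res1 : j 5 * D1 - 2 * j 3 * D0 + 2 * j 1 * q 1 * D2 = 6 * K1 := by
  have := n5
  unfold D1; field_simp; ring
theorem res4 : j 5 * D4 - 2 * j 3 * D3 + 2 * j 1 * D0 = -8 * K4 := by
  have := n5
  unfold D4; field_simp; ring
theorem res2 : j 5 * D2 - 2 * j 3 * D1 + 2 * j 1 * q 1 * D3 =
    -6 * (Lf 2 8 + q 1 * Lf 2 13 + q 1 ^ 2 * (Lf 6 12 + q 1 ^ 3 * Lf 6 17)) := by
  rw [k2_8, k2_13, k6_17]
  unfold D1 D2 D3 D0 K1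
  rw [L4_10]
  have := n1; have := n2; have := n3; have := n4; have := n5; have := nx
  rw [← sub_eq_zero]
  have e : ∀ w w' : LK, w = 0 → w' = 0 → (2 * j 4 * j 5 * w + (4 * j 3 * j 4 + 6 * q 1 * j 1 * j 2) * w') * CC / (j 1 * j 2 ^ 2 * j 3 * j 4 ^ 2 * j 5) = 0 := by
    rintro w w' rfl rfl; simp
  rw [← e _ _ Wa Wb]
  field_simp
  ring
theorem res3 : j 5 * D3 - 2 * j 3 * D2 + 2 * j 1 * q 1 * D4 =
    8 * (Lf 2 9 + q 1 * Lf 2 14) - 8 * q 1 * (Lf 4 11 + q 1 ^ 2 * Lf 4 16) := by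
  rw [k2_9, k2_14, k4_11]
  unfold D4 D2 D3 D0 K4
  rw [L8_10]
  have := n1; have := n2; have := n3; have := n4; have := n5; have := nx
  rw [← sub_eq_zero]
  have e : ∀ w w' : LK, w = 0 → w' = 0 → ((-8 * j 3 * j 4 + 12 * q 1 * j 1 * j 2) * w + 4 * j 2 * j 5 * w') * CC / (j 1 * j 2 ^ 2 * j 3 * j 4 ^ 2 * j 5) = 0 := by
    rintro w w' rfl rfl; simp
  rw [← e _ _ Wa Wb]
  field_simp
  ring
theorem res0 : j 5 * D0 - 2 * j 3 * q 1 * D4 + 2 * j 1 * q 1 * D1 =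
    1 + 6 * (Ls 6 + Ls 11 + q 1 ^ 4 * (Lf 8 14 + q 1 ^ 4 * Lf 8 19)) - 8 * (Ls 7 + Ls 12) +
      8 * q 1 ^ 3 * (Lf 6 13 + q 1 ^ 3 * Lf 6 18) := by
  have e : ∀ w w' v v' : LK, w = 0 → w' = 0 → v = 0 → v' = 0 →
      (-12 * q 1 * j 1 * j 2 * j 4 ^ 2 * v + (- j 2 * j 3 * j 5 ^ 2 + 12 * q 1 * j 1 ^ 2 * j 4 * j 5) * w
      + 12 * q 1 * j 1 * j 2 ^ 2 * j 4 * v' - 2 * j 1 * j 4 * j 5 ^ 2 * w') * CC /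
      (j 1 ^ 2 * j 2 ^ 2 * j 3 ^ 2 * j 4 ^ 2 * j 5) = 0 := by
    rintro w w' v v' rfl rfl rfl rfl; simp
  have h := e _ _ _ _ Wa Wb W4 W2
  have R : 1 + 6 * (Ls 6 + Ls 11 + q 1 ^ 4 * (Lf 8 14 + q 1 ^ 4 * Lf 8 19)) - 8 * (Ls 7 + Ls 12) +
      8 * q 1 ^ 3 * (Lf 6 13 + q 1 ^ 3 * Lf 6 18) =
      (- CC * (j 2 * j 5 ^ 2 / (j 1 ^ 2 * j 4 ^ 2))) - 2 * (- CC * (j 4 * j 5 ^ 2 / (j 2 ^ 2 * j 3 ^ 2)))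
      + 12 * (- CC * (q 1 * j 1 * j 4 / (j 2 ^ 2 * j 3))) - 8 * (- CC * (q 1 * j 3 / (j 2 * j 5)))
      + 12 * q 1 * (q 1 ^ 3 * (j 1 / j 5) * Lf 4 15 + CC * (j 3 / (j 2 * j 5)))
      + 16 * q 1 ^ 2 * (q 1 ^ 3 * (j 3 / j 5) * Lf 8 15 - CC * (j 1 / (j 4 * j 5))) := by
    linear_combination F165 - 2 * F275 + 12 * F121 - 8 * F123 + 6 * l6 + 6 * l11 - 8 * l7 - 8 * l12
      + 12 * q 1 * k8_19 + 16 * q 1 ^ 2 * k6_13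
  rw [R, ← sub_eq_zero, ← h]
  unfold D4 D1 D2 D3 D0 K4 K1
  rw [L8_10, L4_10]
  have := n1; have := n2; have := n3; have := n4; have := n5; have := nx
  field_simp
  ring

end OP
end Part6

section Part7
open Filter Topology
namespace OP

theorem coeff_q_mul (a n : ℤ) (x : LK) : (q a * x).coeff n = x.coeff (n - a) := by
  unfold q; rw [HahnSeries.coeff_single_mul, one_mul]

theorem coeff_one_ne {n : ℤ} (h : n ≠ 0) : (1 : LK).coeff n = 0 := by
  rw [← q_zero, coeff_q, if_neg h]

theorem coeff_two_mul (c : ℚ) (x : LK) (n : ℤ) : (HahnSeries.C c * x).coeff n = c * x.coeff n := by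
  rw [HahnSeries.C_apply, HahnSeries.coeff_single_mul, sub_zero]

theorem D2_eq : D2 = HahnSeries.C (-2) * (GG 4 6 * MM 1) := by
  have h1 := L1_10
  rw [L_MM (by norm_num) (by norm_num)] at h1
  have h2 := JTP (a := 4) (by norm_num) (by norm_num)
  have h3 := G_eq (y := 4) (b := 6) (by norm_num) (by norm_num)
  have h4 := eE (a := 4) (by norm_num)
  have h6 := eE (a := 6) (by norm_num)
  have n10 := E_ne (a := 10) (by norm_num)
  have m4 := E_ne (a := 4) (by norm_num)
  have m6 := E_ne (a := 6) (by norm_num)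
  norm_num at h2 h3
  have : D2 = -2 * (CC / j 1) / j 4 := by
    unfold D2; have := n1; have := n4; field_simp
  rw [this, ← h1, h2, h3, eq_inv_of_mul_eq_one_left h4, eq_inv_of_mul_eq_one_left h6]
  have : (HahnSeries.C (-2 : ℚ) : LK) = -2 := by simp
  rw [this]
  field_simp

theorem D2_neg (n : ℕ) : D2.coeff n < 0 := by
  rw [D2_eq, coeff_two_mul]
  have h := (GE'.GG (y := 4) (b := 6) (by norm_num) (by norm_num)).mul
    (GE'.MM (c := 1) (by norm_num) (by norm_num) n)
  rw [zero_add, one_mul] at h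
  linarith [h.coeff]

theorem x_h : q 1 ^ 4 * Lf 7 14 = j 4 * (HH 3 6 - 1) := by
  have h1 := L_refl 3 6
  have h2 := L_shift (c := 7) (by norm_num) (by norm_num) 14
  rw [L_HH (by norm_num) (by norm_num) (by norm_num) (by norm_num), j6] at h1
  norm_num at h1 h2
  rw [j14, q7] at h2
  rw [q11] at h1
  have := nx
  field_simp at h2
  linear_combination h2 - h1

theorem x_k : q 1 ^ 8 * Lf 8 15 = j 5 * (HH 8 5 - 1) := by
  have h2 := L_shift (c := 8) (by norm_num) (by norm_num) 5
  rw [L_HH (by norm_num) (by norm_num) (by norm_num) (by norm_num)] at h2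
  norm_num at h2
  rw [q8] at h2
  linear_combination (-1 : LK) * h2

theorem V_eq : CC / (j 2 * j 5) = GG 5 5 * MM 2 := by
  have h1 := L2_10
  rw [L_MM (by norm_num) (by norm_num)] at h1
  have h2 := JTP (a := 5) (by norm_num) (by norm_num)
  have h3 := G_eq (y := 5) (b := 5) (by norm_num) (by norm_num)
  have h4 := eE (a := 5) (by norm_num)
  have n10 := E_ne (a := 10) (by norm_num)
  have m4 := E_ne (a := 5) (by norm_num)
  norm_num at h2 h3
  rw [← div_div, ← h1, h2, h3, eq_inv_of_mul_eq_one_left h4]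
  field_simp

theorem D4_eq : D4 = HahnSeries.C (-2) * (GG 5 5 * MM 2) + (HahnSeries.C (-2) * (q (-4) * (HH 8 5 - 1)) +
    HahnSeries.C (-6) * (q (-1) * (HH 3 6 - 1))) := by
  have c2 : (HahnSeries.C (-2 : ℚ) : LK) = -2 := by simp
  have c6 : (HahnSeries.C (-6 : ℚ) : LK) = -6 := by simp
  rw [c2, c6, ← V_eq, q_neg, q_neg, q4]
  have := n1; have := n2; have := n3; have := n4; have := n5; have := nx
  have h1 : HH 3 6 - 1 = q 1 ^ 4 * Lf 7 14 / j 4 := by rw [x_h]; field_simp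
  have h2 : HH 8 5 - 1 = q 1 ^ 8 * Lf 8 15 / j 5 := by rw [x_k]; field_simp
  rw [h1, h2, show q 1 ^ 4 * Lf 7 14 = q 1 ^ 2 * (q 1 ^ 2 * Lf 7 14) by ring, k7_14]
  unfold D4 K4 D3 D0
  rw [L8_10]
  field_simp
  ring

theorem HH36_pos (n : ℕ) (h : n ≠ 0) (h' : n ≠ 1) (h'' : n ≠ 4) : 1 ≤ (HH 3 6).coeff ((n : ℤ) + 1) := by
  obtain ⟨k, l, e⟩ : ∃ k l : ℕ, n + 1 = 4 * l + 3 * k := by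
    have : (n + 1) % 3 < 3 := Nat.mod_lt _ (by norm_num)
    rcases (by omega : (n + 1) % 3 = 0 ∨ (n + 1) % 3 = 1 ∨ (n + 1) % 3 = 2) with h | h | h
    · exact ⟨(n + 1) / 3, 0, by omega⟩
    · exact ⟨(n + 1) / 3 - 1, 1, by omega⟩
    · exact ⟨(n + 1) / 3 - 2, 2, by omega⟩
  have := (GE'.HH (c := 3) (b := 6) (by norm_num) (by norm_num) (by norm_num) (by norm_num) k l).coeff
  rw [show (10 - 6 : ℤ) * l + 3 * k = (n : ℤ) + 1 by omega] at this
  exact this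

theorem D4_neg (n : ℕ) : D4.coeff n < 0 := by
  rw [D4_eq, HahnSeries.coeff_add, HahnSeries.coeff_add, coeff_two_mul, coeff_two_mul, coeff_two_mul,
    coeff_q_mul, coeff_q_mul, HahnSeries.coeff_sub, HahnSeries.coeff_sub, coeff_one_ne (by omega),
    coeff_one_ne (by omega)]
  have v : GE' 0 (GG 5 5 * MM 2) := by
    simpa using (GE'.GG (y := 5) (b := 5) (by norm_num) (by norm_num)).mul
      (GE'.MM (c := 2) (by norm_num) (by norm_num) 0)
  have a := fun k l => GE'.HH (c := 8) (b := 5) (by norm_num) (by norm_num) (by norm_num) (by norm_num) k l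
  have b := (GE'.HH (c := 3) (b := 6) (by norm_num) (by norm_num) (by norm_num) (by norm_num) 0 0).nn
  have v1 := v.nn n
  have a1 := (a 0 0).nn (n - (-4))
  have b1 := b (n - (-1))
  by_cases h0 : n = 0
  · subst h0
    have := v.coeff
    simp only [Nat.cast_zero] at *
    linarith
  by_cases h1 : n = 1
  · subst h1
    have := (a 0 1).coeff
    norm_num at *
    linarith
  by_cases h4 : n = 4
  · subst h4
    have := (a 1 0).coeff
    norm_num at *
    linarith
  have := HH36_pos n h0 h1 h4
  rw [show (n : ℤ) + 1 = n - (-1) by ring] at this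
  linarith

end OP
end Part7

section Part8
open Filter Topology
namespace OP

/-- the substitution `q -> q^5` -/
noncomputable def io : LK →+* LK :=
  HahnSeries.embDomainRingHom (AddMonoidHom.mulLeft (5 : ℤ))
    (fun a b h => by simpa using h) (fun a b => by simp)

theorem coeff_io (x : LK) (n : ℤ) : (io x).coeff (5 * n) = x.coeff n := by
  exact HahnSeries.embDomain_mk_coeff (f := fun n : ℤ => 5 * n) (fun a b h => by simpa using h) (fun a b => by simp)

theorem coeff_io' (x : LK) (n : ℤ) (h : ¬ (5 ∣ n)) : (io x).coeff n = 0 := by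
  apply HahnSeries.embDomain_of_notMem_range
  rintro ⟨m, rfl⟩
  exact h ⟨m, rfl⟩

theorem io_q (a : ℤ) : io (q a) = q (5 * a) := by
  exact HahnSeries.embDomain_single

theorem io_mon (n a : ℤ) : io (mon n a) = mon n (5 * a) := by
  unfold mon; rw [map_mul, io_q, map_zpow₀, map_neg, map_one]

theorem io_sg (n a : ℤ) : io (sg n a) = sg n a := by
  unfold sg; rw [map_intCast]

theorem io_cont : Continuous io := by
  refine continuous_of_continuousAt_zero io ?_
  unfold ContinuousAt
  rw [map_zero, nhds_basis_LK.tendsto_iff nhds_basis_LK]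
  intro N _
  refine ⟨max N 0, trivial, fun x hx n hn => ?_⟩
  by_cases h : (5 : ℤ) ∣ n
  · obtain ⟨m, rfl⟩ := h
    rw [coeff_io]
    exact hx m (by omega)
  · exact coeff_io' x n h

noncomputable def St (jj : ℤ) (p : ℤ × ℤ) : LK := if p.1 = 0 then 0 else
  sg p.1 p.2 * mon p.1 (p.1 ^ 2 + jj * p.1 + 5 * p.1 * p.2)

theorem sSt {jj : ℤ} (h0 : 0 ≤ jj) (h5 : jj ≤ 5) : Summable (St jj) := by
  refine summable_quad _ (fun p => |p.1| + |p.2| - 1) (fun p => ?_) id Function.injective_id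
    1 fun p => ?_
  · unfold St
    split_ifs with hp
    · exact OrdGE.zero _
    refine ord_sg_mul _ _ (ord_mon _ _) (fun h1 h2 => ?_) (fun h1 h2 => ?_)
    · rw [abs_of_nonneg h2, abs_of_nonneg h1]
      nlinarith [mul_nonneg h2 (by omega : 0 ≤ p.1 - 1), mul_nonneg h0 h1]
    · rw [abs_of_neg h2, abs_of_neg h1]
      nlinarith [mul_nonneg (by omega : 0 ≤ -1-p.2) (by omega : 0 ≤ -1-p.1),
        mul_nonneg (by omega : 0 ≤ 5 - jj) (by omega : 0 ≤ -1-p.1)]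
  · simp

noncomputable def SS (jj : ℤ) : LK := ∑' p : ℤ × ℤ, St jj p

def dd : (Fin 5 × Fin 2) × (ℤ × ℤ) ≃ ℤ × ℤ :=
  (Equiv.prodProdProdComm (Fin 5) (Fin 2) ℤ ℤ).trans
    (((Equiv.prodComm _ _).trans (Int.divModEquiv 5).symm).prodCongr
      ((Equiv.prodComm _ _).trans (Int.divModEquiv 2).symm))

theorem dd_apply (b : Fin 5) (ε : Fin 2) (m r : ℤ) :
    dd ((b, ε), (m, r)) = (m * 5 + (b : ℕ), r * 2 + (ε : ℕ)) := by
  simp [dd]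

theorem St_dd (jj : ℤ) (b : Fin 5) (ε : Fin 2) (p : ℤ × ℤ) (hb : b ≠ 0) :
    St jj (dd ((b, ε), p)) = mon (b : ℕ) ((b : ℕ) ^ 2 + jj * (b : ℕ) + 5 * ((b : ℕ) * (ε : ℕ))) *
      io (Lt (2 * (b : ℕ)) (2 * (b : ℕ) + jj + 5 + 5 * (ε : ℕ)) p) := by
  obtain ⟨m, r⟩ := p
  rw [dd_apply]
  have hb' : (b : ℕ) ≠ 0 := by intro h; exact hb (Fin.ext h)
  have := b.2
  have := ε.2
  generalize (b : ℕ) = B at *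
  generalize (ε : ℕ) = e at *
  unfold St
  rw [if_neg (by simp only []; omega)]
  unfold Lt
  rw [map_mul, io_sg, io_mon, mul_left_comm, mon_mul]
  congr 1
  · have : sgZ (m * 5 + B) (r * 2 + e) = sgZ m r := by unfold sgZ; split_ifs <;> omega
    simp only [sg, this]
  · refine mon_congr ⟨2 * m, by simp only []; ring⟩ ?_
    simp only []
    unfold qe; ring

theorem St_dd0 (jj : ℤ) (ε : Fin 2) (p : ℤ × ℤ) :
    St jj (dd ((0, ε), p)) = io (Lst (jj + 5 + 5 * (ε : ℕ)) p) := by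
  obtain ⟨m, r⟩ := p
  rw [dd_apply]
  have := ε.2
  generalize (ε : ℕ) = e at *
  unfold St Lst
  by_cases hm : m = 0
  · rw [if_pos (by simp [hm]), if_pos hm, map_zero]
  rw [if_neg (by simp [hm]), if_neg hm]
  unfold Lt
  rw [map_mul, io_sg, io_mon]
  congr 1
  · have : sgZ (m * 5 + ((0 : Fin 5) : ℕ)) (r * 2 + e) = sgZ m r := by simp [sgZ]; split_ifs <;> omega
    simp only [sg, this]
  · refine mon_congr ⟨2 * m, by simp; ring⟩ ?_
    simp
    unfold qe; ring

theorem map_sum {f : ℤ × ℤ → LK} (hf : Summable f) (c : LK) :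
    HasSum (fun p => c * io (f p)) (c * io (∑' p, f p)) :=
  (hf.hasSum.map io io_cont).mul_left c

theorem tsum_fin {ι κ : Type*} [Fintype ι] {f : ι × κ → LK} (hs : Summable f) {a : ι → LK}
    (H : ∀ b, HasSum (fun p => f (b, p)) (a b)) : ∑' p, f p = ∑ b, a b := by
  have h1 := hs.hasSum.prod_fiberwise H
  rw [← h1.tsum_eq, tsum_fintype]

noncomputable def Sb (jj : ℤ) (p : Fin 5 × Fin 2) : LK := if p.1 = 0 then
    io (Ls (jj + 5 + 5 * (p.2 : ℕ)))
  else mon (p.1 : ℕ) ((p.1 : ℕ) ^ 2 + jj * (p.1 : ℕ) + 5 * ((p.1 : ℕ) * (p.2 : ℕ))) *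
      io (Lf (2 * (p.1 : ℕ)) (2 * (p.1 : ℕ) + jj + 5 + 5 * (p.2 : ℕ)))

theorem SS_fib (jj : ℤ) (b : Fin 5 × Fin 2) : HasSum (fun p => St jj (dd (b, p))) (Sb jj b) := by
  obtain ⟨b, ε⟩ := b
  by_cases hb : b = 0
  · subst hb
    have := map_sum (sLs (jj + 5 + 5 * (ε : ℕ))) 1
    simp only [one_mul] at this
    simp only [Sb, if_pos, Ls]
    refine this.congr_fun fun p => ?_
    exact St_dd0 jj ε p
  · simp only [Sb, if_neg hb, Lf]
    refine (map_sum (sL (c := 2 * (b : ℕ)) ?_ ?_ _) _).congr_fun fun p => St_dd jj b ε p hb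
    · have hb' : (b : ℕ) ≠ 0 := by intro h; exact hb (Fin.ext h)
      omega
    · have := b.2; omega

theorem SS_eq' {jj : ℤ} (h0 : 0 ≤ jj) (h5 : jj ≤ 5) : SS jj = ∑ b : Fin 5 × Fin 2, Sb jj b := by
  have hs : Summable (fun p => St jj (dd p)) := (Equiv.summable_iff (f := St jj) dd).2 (sSt h0 h5)
  have h1 := tsum_fin hs (SS_fib jj)
  have h2 : ∑' p, St jj (dd p) = SS jj := dd.tsum_eq (St jj)
  exact h2.symm.trans h1

theorem SS_eq {jj : ℤ} (h0 : 0 ≤ jj) (h5 : jj ≤ 5) : SS jj = ∑ b : Fin 5, ∑ ε : Fin 2, Sb jj (b, ε) := by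
  rw [SS_eq' h0 h5, Fintype.sum_prod_type]

/-! theta function -/
noncomputable def ph : LK := ∑' n : ℤ, mon n (n ^ 2)

theorem sph : Summable (fun n : ℤ => mon n (n ^ 2)) := by
  refine summable_quad _ (fun n => n ^ 2) (fun n => ord_mon _ _) (fun n => (n, 0))
    (fun x y h => by simpa using h) 1 fun n => ?_
  simp only [abs_zero, add_zero]
  rcases abs_cases n with ⟨h, h'⟩ | ⟨h, h'⟩ <;> rw [h] <;> nlinarith

theorem ph_eq' : ph = ∑ b : Fin 5, mon (b : ℕ) ((b : ℕ) ^ 2) * io (j (5 + 2 * (b : ℕ))) := by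
  let de := (Equiv.prodComm (Fin 5) ℤ).trans (Int.divModEquiv 5).symm
  have H : ∀ b : Fin 5, HasSum (fun m : ℤ => mon (de (b, m)) (de (b, m) ^ 2))
      (mon (b : ℕ) ((b : ℕ) ^ 2) * io (j (5 + 2 * (b : ℕ)))) := by
    intro b
    refine (((sj (5 + 2 * (b : ℕ))).hasSum.map io io_cont).mul_left _).congr_fun fun m => ?_
    have : de (b, m) = m * 5 + (b : ℕ) := by simp [de]
    rw [this]
    simp only [Function.comp]
    rw [io_mon, mon_mul]
    refine mon_congr ⟨2 * m, by ring⟩ ?_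
    unfold qe; ring
  unfold ph
  have hs : Summable (fun p => mon (de p) (de p ^ 2)) := (Equiv.summable_iff (f := fun n : ℤ => mon n (n ^ 2)) de).2 sph
  have h1 := tsum_fin hs H
  have h2 : ∑' p, mon (de p) (de p ^ 2) = ∑' n : ℤ, mon n (n ^ 2) :=
    Equiv.tsum_eq de (fun n : ℤ => mon n (n ^ 2))
  exact h2.symm.trans h1

theorem io_q1 : io (q 1) = q 1 ^ 5 := by rw [io_q, ← q5]; norm_num

theorem mon1 (a : ℕ) : mon 1 a = - q 1 ^ a := by
  unfold mon; rw [q_eq]; simp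
theorem mon2 (a : ℕ) : mon 2 a = q 1 ^ a := by
  unfold mon; rw [q_eq, (by decide : Even (2:ℤ)).neg_one_zpow, one_mul]
theorem mon3 (a : ℕ) : mon 3 a = - q 1 ^ a := by
  unfold mon; rw [q_eq, (by decide : Odd (3:ℤ)).neg_one_zpow, neg_one_mul]
theorem mon4 (a : ℕ) : mon 4 a = q 1 ^ a := by
  unfold mon; rw [q_eq, (by decide : Even (4:ℤ)).neg_one_zpow, one_mul]

theorem ph_eq : ph = io (j 5) - 2 * q 1 * io (j 3) + 2 * q 1 ^ 4 * io (j 1) := by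
  rw [ph_eq', Fin.sum_univ_five]
  have m1 := mon1 1
  have m2 := mon2 4
  have m3 := mon3 9
  have m4 := mon4 16
  have m0 : mon 0 0 = 1 := by rw [mon_zero_left, q_zero]
  simp only [Fin.val_zero, Fin.val_one, Fin.val_two, show ((3 : Fin 5) : ℕ) = 3 from rfl, show ((4 : Fin 5) : ℕ) = 4 from rfl]
  norm_num at *
  rw [m0, m1, m2, m3, m4, j7, j9, j11, j13]
  simp only [map_div₀, map_neg, map_pow, io_q1]
  have := nx
  field_simp
  ring

theorem SS1_eq : SS 1 = io (Ls 6 + Ls 11) - q 1 ^ 2 * io (Lf 2 8 + q 1 * Lf 2 13)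
    + q 1 ^ 6 * io (Lf 4 10 + q 1 ^ 2 * Lf 4 15) - q 1 ^ 12 * io (Lf 6 12 + q 1 ^ 3 * Lf 6 17)
    + q 1 ^ 20 * io (Lf 8 14 + q 1 ^ 4 * Lf 8 19) := by
  rw [SS_eq (by norm_num) (by norm_num), Fin.sum_univ_five]
  simp only [Fin.sum_univ_two, Sb, Fin.val_zero, Fin.val_one, Fin.val_two, show ((3 : Fin 5) : ℕ) = 3 from rfl, show ((4 : Fin 5) : ℕ) = 4 from rfl]
  have m1 := mon1 2
  have m2 := mon2 6
  have m3 := mon3 12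
  have m4 := mon4 20
  have m1' := mon1 7
  have m2' := mon2 16
  have m3' := mon3 27
  have m4' := mon4 40
  norm_num [Fin.ext_iff] at *
  rw [m1, m2, m3, m4, m1', m2', m3', m4']
  simp only [io_q1]
  ring

theorem SS2_eq : SS 2 = io (Ls 7 + Ls 12) - q 1 ^ 3 * io (Lf 2 9 + q 1 * Lf 2 14)
    + q 1 ^ 8 * io (Lf 4 11 + q 1 ^ 2 * Lf 4 16) - q 1 ^ 15 * io (Lf 6 13 + q 1 ^ 3 * Lf 6 18)
    + q 1 ^ 24 * io (Lf 8 15 + q 1 ^ 4 * Lf 8 20) := by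
  rw [SS_eq (by norm_num) (by norm_num), Fin.sum_univ_five]
  simp only [Fin.sum_univ_two, Sb, Fin.val_zero, Fin.val_one, Fin.val_two, show ((3 : Fin 5) : ℕ) = 3 from rfl, show ((4 : Fin 5) : ℕ) = 4 from rfl]
  have m1 := mon1 3
  have m2 := mon2 8
  have m3 := mon3 15
  have m4 := mon4 24
  have m1' := mon1 8
  have m2' := mon2 18
  have m3' := mon3 30
  have m4' := mon4 44
  norm_num [Fin.ext_iff] at *
  rw [m1, m2, m3, m4, m1', m2', m3', m4']
  simp only [io_q1]
  ring

noncomputable def Dh : LK := io D0 + q 1 * io D1 + q 1 ^ 2 * io D2 + q 1 ^ 3 * io D3 + q 1 ^ 4 * io D4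

theorem ph_Dh : ph * Dh = 1 + 6 * SS 1 - 8 * SS 2 := by
  have r0 := congrArg io res0
  have r1 := congrArg io res1
  have r2 := congrArg io res2
  have r3 := congrArg io res3
  have r4 := congrArg io res4
  have h20 := L_shift (c := 8) (by norm_num) (by norm_num) 10
  norm_num at h20
  rw [j10, q8] at h20
  have h20' := congrArg io h20
  rw [ph_eq, SS1_eq, SS2_eq]
  unfold Dh
  unfold K1 at r1
  unfold K4 at r4
  simp only [map_add, map_sub, map_mul, map_neg, map_ofNat, map_one, map_pow, map_zero, io_q1] at *
  linear_combination r0 + q 1 * r1 + q 1 ^ 2 * r2 + q 1 ^ 3 * r3 + q 1 ^ 4 * r4 - 8 * q 1 ^ 4 * h20'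

theorem Dh_neg (n : ℕ) (h : n % 5 = 2 ∨ n % 5 = 4) : Dh.coeff n < 0 := by
  unfold Dh
  rw [← q2, ← q3, ← q4]
  simp only [HahnSeries.coeff_add, coeff_q_mul]
  rcases h with h | h
  · rw [coeff_io' _ _ (by omega), coeff_io' _ _ (by omega), coeff_io' D3 _ (by omega),
      coeff_io' D4 _ (by omega), show (n : ℤ) - 2 = 5 * ((n / 5 : ℕ) : ℤ) by omega, coeff_io]
    simpa only [zero_add, add_zero] using D2_neg (n / 5)
  · rw [coeff_io' _ _ (by omega), coeff_io' _ _ (by omega), coeff_io' D3 _ (by omega),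
      coeff_io' D2 _ (by omega), show (n : ℤ) - 4 = 5 * ((n / 5 : ℕ) : ℤ) by omega, coeff_io]
    simpa only [zero_add, add_zero] using D4_neg (n / 5)

end OP
end Part8

section Part9
open Filter Topology
namespace OP

theorem ord_y (n : ℕ) : OrdGE n (q 1 ^ n) := by rw [← q_eq]; exact ord_q _
theorem y_ne_one (n : ℕ) : 1 - q 1 ^ (n + 1) ≠ 0 := by
  rw [← q_eq]; exact q_ne_one (by omega)
theorem y_add_ne (n : ℕ) : 1 + q 1 ^ n ≠ 0 := by
  rw [← q_eq]; exact q_add_ne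

/-- half of the generating function of overpartitions with `k+1` parts and largest part `L+1` -/
noncomputable def s : ℕ → ℕ → LK
  | 0 => fun L => q 1 ^ (L + 1)
  | k + 1 => fun L => q 1 ^ (L + 1) * (s k L + 2 * ∑ i ∈ Finset.range L, s k i)

theorem s_zero (L : ℕ) : s 0 L = q 1 ^ (L + 1) := rfl
theorem s_succ (k L : ℕ) : s (k + 1) L = q 1 ^ (L + 1) * (s k L + 2 * ∑ i ∈ Finset.range L, s k i) := rfl

theorem s_I (k L : ℕ) : s (k + 1) (L + 1) = q 1 * s (k + 1) L + q 1 ^ (L + 2) * (s k (L + 1) + s k L) := by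
  rw [s_succ, s_succ, Finset.sum_range_succ]; ring

theorem s_L0 (k : ℕ) : s k 0 = q 1 ^ (k + 1) := by
  induction k with
  | zero => rfl
  | succ k ih => rw [s_succ, ih]; simp; ring

theorem s_III (k L : ℕ) : (1 - q 1 ^ (k + 1)) * s (k + 1) L - (1 - q 1 ^ (L + 1)) * s k (L + 1) =
    (q 1 ^ (k + 1) - q 1 ^ (L + 1)) * s k L := by
  have h0 : ∀ k, (1 - q 1) * s k 1 = 2 * q 1 ^ (k + 2) - q 1 ^ (2 * k + 2) - q 1 ^ (2 * k + 3) := by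
    intro k
    induction k with
    | zero => rw [s_zero]; ring
    | succ k ih =>
      have := s_I k 0
      rw [s_L0, s_L0] at this
      norm_num at this
      rw [this]
      linear_combination q 1 ^ 2 * ih
  have h1 : ∀ L, (1 - q 1) * s 1 L = (1 - q 1 ^ (L + 1)) * q 1 ^ (L + 2) + (q 1 - q 1 ^ (L + 1)) * q 1 ^ (L + 1) := by
    intro L
    induction L with
    | zero => rw [s_L0]; ring
    | succ L ih =>
      have := s_I 0 L
      rw [s_zero, s_zero] at this
      norm_num at this
      rw [this]
      linear_combination q 1 * ih
  induction k generalizing L with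
  | zero => rw [s_zero, s_zero]; linear_combination h1 L
  | succ k ihk =>
    induction L with
    | zero => rw [s_L0, s_L0]; linear_combination - h0 (k + 1)
    | succ L ihL =>
      have a1 := ihk (L + 1)
      have a2 := ihk L
      have i1 := s_I (k + 1) L
      have i2 := s_I k (L + 1)
      have i3 := s_I k L
      linear_combination q 1 * ihL + q 1 ^ (L + 3) * (a1 + a2) + (1 - q 1 ^ (k + 2)) * i1
        - (1 - q 1 ^ (L + 2)) * i2 + (q 1 * (q 1 ^ (L + 1) - q 1 ^ (k + 1))) * i3

theorem s_symm (k L : ℕ) : s k L = s L k := by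
  induction k generalizing L with
  | zero => rw [s_zero, s_L0]
  | succ k ih =>
    have h1 := s_III k L
    have h2 := s_III L k
    rw [← ih (L + 1), ← ih L] at h2
    have : (1 - q 1 ^ (k + 1)) * (s (k + 1) L - s L (k + 1)) = 0 := by linear_combination h1 + h2
    exact sub_eq_zero.1 ((mul_eq_zero.1 this).resolve_left (y_ne_one k))

theorem ord_natCast_mul {N : ℤ} {x : LK} (hx : OrdGE N x) (k : ℕ) : OrdGE N ((k : LK) * x) := by
  have := ord_intCast_mul hx k
  simpa using this

theorem OrdGE.sum {ι : Type*} {N : ℤ} {t : Finset ι} {f : ι → LK} (h : ∀ i ∈ t, OrdGE N (f i)) :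
    OrdGE N (∑ i ∈ t, f i) := by
  classical
  induction t using Finset.induction_on with
  | empty => simpa using OrdGE.zero N
  | insert a t ha ih =>
    rw [Finset.sum_insert ha]
    exact (h a (by simp)).add (ih fun i hi => h i (by simp [hi]))

theorem ord_s (k L : ℕ) : OrdGE (k + L) (s k L) := by
  induction k generalizing L with
  | zero => rw [s_zero]; exact (ord_y _).mono (by push_cast; omega)
  | succ k ih =>
    rw [s_succ]
    have h : OrdGE k (s k L + 2 * ∑ i ∈ Finset.range L, s k i) := by
      refine ((ih L).mono (by omega)).add ?_
      exact ord_natCast_mul (k := 2) (OrdGE.sum fun i _ => (ih i).mono (by omega))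
    exact ((ord_y (L + 1)).mul h).mono (by push_cast; omega)

/-! partial fractions -/
noncomputable def be : ℕ → LK
  | 0 => 1
  | n + 1 => be n * (1 + q 1 ^ n) / (1 - q 1 ^ (n + 1))
noncomputable def de : ℕ → LK
  | 0 => 1
  | n + 1 => - (de n * (1 + q 1 ^ (n + 1)) / (1 - q 1 ^ (n + 1)))

theorem be_succ (n : ℕ) : be (n + 1) * (1 - q 1 ^ (n + 1)) = be n * (1 + q 1 ^ n) := by
  have := y_ne_one n
  show be n * (1 + q 1 ^ n) / (1 - q 1 ^ (n + 1)) * _ = _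
  field_simp
theorem de_succ (n : ℕ) : de (n + 1) * (1 - q 1 ^ (n + 1)) = - (de n * (1 + q 1 ^ (n + 1))) := by
  have := y_ne_one n
  show - (de n * (1 + q 1 ^ (n + 1)) / (1 - q 1 ^ (n + 1))) * _ = _
  field_simp

theorem conv_one (L : ℕ) : ∑ p ∈ Finset.HasAntidiagonal.antidiagonal L, de p.1 * be p.2 = 1 := by
  let A : PowerSeries LK := PowerSeries.mk de
  let B : PowerSeries LK := PowerSeries.mk be
  let R : PowerSeries LK →+* PowerSeries LK := PowerSeries.rescale (q 1)
  have hB : (1 - PowerSeries.X) * B = (1 + PowerSeries.X) * R B := by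
    refine PowerSeries.ext fun n => ?_
    cases n with
    | zero =>
      rw [sub_mul, add_mul, one_mul, one_mul, map_sub, map_add, PowerSeries.coeff_zero_X_mul,
        PowerSeries.coeff_zero_X_mul]
      simp only [B, R, PowerSeries.coeff_rescale, PowerSeries.coeff_mk]
      ring
    | succ n =>
      rw [sub_mul, add_mul, one_mul, one_mul, map_sub, map_add, PowerSeries.coeff_succ_X_mul,
        PowerSeries.coeff_succ_X_mul]
      simp only [B, R, PowerSeries.coeff_rescale, PowerSeries.coeff_mk]
      linear_combination be_succ n
  have hA : (1 + PowerSeries.X) * A = (1 - R PowerSeries.X) * R A := by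
    refine PowerSeries.ext fun n => ?_
    rw [show (1 - R PowerSeries.X) * R A = R A - R (PowerSeries.X * A) by rw [map_mul]; ring,
      add_mul, one_mul, map_sub, map_add]
    simp only [R, PowerSeries.coeff_rescale]
    cases n with
    | zero =>
      rw [PowerSeries.coeff_zero_X_mul]
      simp only [A, PowerSeries.coeff_mk]
      ring
    | succ n =>
      rw [PowerSeries.coeff_succ_X_mul]
      simp only [A, PowerSeries.coeff_mk]
      linear_combination de_succ n
  have hG : (1 - PowerSeries.X) * (A * B) = R ((1 - PowerSeries.X) * (A * B)) := by
    rw [map_mul, map_mul, map_sub, map_one]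
    linear_combination A * hB + R B * hA
  have hc : ∀ n, PowerSeries.coeff (n + 1) ((1 - PowerSeries.X) * (A * B)) = 0 := by
    intro n
    have h := congrArg (PowerSeries.coeff (n + 1)) hG
    simp only [R] at h
    rw [PowerSeries.coeff_rescale] at h
    have : (1 - q 1 ^ (n + 1)) * PowerSeries.coeff (n + 1) ((1 - PowerSeries.X) * (A * B)) = 0 := by
      linear_combination h
    exact (mul_eq_zero.1 this).resolve_left (y_ne_one n)
  have e : ∀ L, ∑ p ∈ Finset.HasAntidiagonal.antidiagonal L, de p.1 * be p.2 = PowerSeries.coeff L (A * B) := by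
    intro L
    rw [PowerSeries.coeff_mul]; simp [A, B]
  rw [e]
  induction L with
  | zero => rw [← e]; simp [de, be]
  | succ L ih =>
    have := hc L
    rw [sub_mul, one_mul, map_sub, PowerSeries.coeff_succ_X_mul, ih] at this
    linear_combination this

theorem s_formula (k L : ℕ) : s k L = q 1 ^ (L + 1) * ∑ r ∈ Finset.range (L + 1),
    de r * be (L - r) * q 1 ^ ((r + 1) * k) := by
  induction k generalizing L with
  | zero =>
    rw [s_zero]
    have := conv_one L
    rw [Finset.Nat.sum_antidiagonal_eq_sum_range_succ (fun i j => de i * be j)] at this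
    simp [this]
  | succ k ihk =>
    induction L with
    | zero => rw [s_L0]; simp [de, be]; ring
    | succ L ihL =>
      rw [s_I, ihL, ihk, ihk]
      rw [Finset.sum_range_succ _ (L + 1), Finset.sum_range_succ _ (L + 1)]
      have key : ∑ r ∈ Finset.range (L + 1), de r * be (L + 1 - r) * q 1 ^ ((r + 1) * (k + 1)) =
          ∑ r ∈ Finset.range (L + 1), de r * be (L - r) * q 1 ^ ((r + 1) * (k + 1)) +
          q 1 ^ (L + 2) * ∑ r ∈ Finset.range (L + 1), de r * be (L + 1 - r) * q 1 ^ ((r + 1) * k) +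
          q 1 ^ (L + 1) * ∑ r ∈ Finset.range (L + 1), de r * be (L - r) * q 1 ^ ((r + 1) * k) := by
        rw [Finset.mul_sum, Finset.mul_sum, ← Finset.sum_add_distrib, ← Finset.sum_add_distrib]
        refine Finset.sum_congr rfl fun r hr => ?_
        obtain ⟨N, rfl⟩ := Nat.exists_eq_add_of_le (Nat.lt_succ_iff.1 (Finset.mem_range.1 hr))
        rw [show r + N + 1 - r = N + 1 by omega, show r + N - r = N by omega]
        have := be_succ N
        linear_combination (de r * q 1 ^ ((r + 1) * k) * q 1 ^ (r + 1)) * this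
      rw [key, show L + 1 - (L + 1) = 0 by omega]
      ring

end OP
end Part9

section Part10
open Filter Topology
namespace OP

theorem ord_yinv (n : ℕ) : OrdGE 0 (1 - q 1 ^ (n + 1))⁻¹ := by
  rw [← q_eq]; exact ord_inv (by omega)
theorem ord_y0 (n : ℕ) : OrdGE 0 (q 1 ^ n) := (ord_y n).mono (by omega)
theorem ord_be (n : ℕ) : OrdGE 0 (be n) := by
  induction n with
  | zero => exact ord_one
  | succ n ih =>
    show OrdGE 0 (be n * (1 + q 1 ^ n) / (1 - q 1 ^ (n + 1)))
    rw [div_eq_mul_inv]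
    exact ord_mul0 (ord_mul0 ih (ord_one.add (ord_y0 n))) (ord_yinv n)
theorem ord_de (n : ℕ) : OrdGE 0 (de n) := by
  induction n with
  | zero => exact ord_one
  | succ n ih =>
    show OrdGE 0 (-(de n * (1 + q 1 ^ (n+1)) / (1 - q 1 ^ (n + 1))))
    rw [div_eq_mul_inv]
    exact (ord_mul0 (ord_mul0 ih (ord_one.add (ord_y0 _))) (ord_yinv n)).neg

noncomputable def Bv (r : ℕ) : LK := ∑' i : ℕ, be i * q 1 ^ (i * (r + 1))
theorem ord_be_y (i n : ℕ) : OrdGE n (be i * q 1 ^ n) := by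
  rw [mul_comm]; exact ord_mul0 (ord_y n) (ord_be i)
theorem sBv (r : ℕ) : Summable (fun i : ℕ => be i * q 1 ^ (i * (r + 1))) := by
  refine summable_lin _ 1 one_pos fun i => (ord_be_y _ _).mono ?_
  push_cast; nlinarith

theorem Bv_step (r : ℕ) : (1 - q 1 ^ (r + 1)) * Bv r = (1 + q 1 ^ (r + 1)) * Bv (r + 1) := by
  have h1 : Bv r - Bv (r + 1) = q 1 ^ (r + 1) * (Bv r + Bv (r + 1)) := by
    unfold Bv
    rw [← (sBv r).tsum_sub (sBv (r + 1)), ((sBv r).sub (sBv (r + 1))).tsum_eq_zero_add,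
      ← (sBv r).tsum_add (sBv (r + 1)), ← tsum_mul_left]
    simp only [zero_mul, sub_self, zero_add]
    refine tsum_congr fun i => ?_
    linear_combination q 1 ^ ((i + 1) * (r + 1)) * be_succ i
  linear_combination h1

theorem de_Bv (r : ℕ) : de r * Bv r = (-1) ^ r * Bv 0 := by
  induction r with
  | zero => simp [de]
  | succ r ih =>
    have h1 := Bv_step r
    have h2 := de_succ r
    have n1 := y_ne_one r
    have n2 := y_add_ne (r + 1)
    have : (1 - q 1 ^ (r + 1)) * (1 + q 1 ^ (r + 1)) * (de (r + 1) * Bv (r + 1) - (-1) ^ (r + 1) * Bv 0) = 0 := by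
      linear_combination (1 + q 1 ^ (r + 1)) * Bv (r + 1) * h2 + de r * (1 + q 1 ^ (r + 1)) * h1
        - (1 + q 1 ^ (r + 1)) * (1 - q 1 ^ (r + 1)) * ih
    exact sub_eq_zero.1 ((mul_eq_zero.1 this).resolve_left (mul_ne_zero n1 n2))

noncomputable def rho (r : ℕ) : LK := (1 - q 1 ^ (r + 1)) / (1 + q 1 ^ (r + 1))

theorem de_Bv' (r : ℕ) : de r * Bv (r + 1) = (-1) ^ r * rho r * Bv 0 := by
  have h1 := Bv_step r
  have n2 := y_add_ne (r + 1)
  have h3 := de_Bv r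
  unfold rho
  field_simp
  linear_combination (1 - q 1 ^ (r + 1)) * h3 - de r * h1

noncomputable def hh (m : ℕ) (p : ℕ × ℕ) : LK :=
  de p.1 * be p.2 * q 1 ^ ((p.1 + 1) ^ 2 + (p.1 + 2) * p.2 + (p.1 + 1) * m)

theorem summable_two {ι : Type*} (f : ι → LK) (g : ι → ℤ × ℤ) (hg : Function.Injective g)
    (hf : ∀ i, OrdGE (|(g i).1| + |(g i).2|) (f i)) : Summable f :=
  summable_quad f (fun i => |(g i).1| + |(g i).2|) hf g hg 0 fun i => by simp

theorem shh (m : ℕ) : Summable (hh m) := by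
  refine summable_two _ (fun p => ((p.1 : ℤ), (p.2 : ℤ))) (fun a b h => ?_) fun p => ?_
  · simp only [Prod.mk.injEq, Nat.cast_inj] at h
    exact Prod.ext h.1 h.2
  · unfold hh
    rw [mul_comm]
    refine (ord_mul0 (ord_y _) (ord_mul0 (ord_de _) (ord_be _))).mono ?_
    simp only [Nat.abs_cast]
    push_cast
    nlinarith [mul_nonneg (Nat.cast_nonneg (α := ℤ) p.1) (Nat.cast_nonneg (α := ℤ) p.2),
      mul_nonneg (Nat.cast_nonneg (α := ℤ) p.1) (Nat.cast_nonneg (α := ℤ) m),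
      Nat.cast_nonneg (α := ℤ) p.1, Nat.cast_nonneg (α := ℤ) p.2, Nat.cast_nonneg (α := ℤ) m]

noncomputable def gg (r m : ℕ) : LK := (-1) ^ r * rho r * q 1 ^ ((r + 1) ^ 2 + (r + 1) * m)

theorem claim1 (m : ℕ) : ∑' L : ℕ, s (L + m) L = Bv 0 * ∑' r : ℕ, gg r m := by
  have h1 : ∑' p, hh m p = Bv 0 * ∑' r : ℕ, gg r m := by
    rw [(shh m).tsum_prod, ← tsum_mul_left]
    refine tsum_congr fun r => ?_
    have : Bv 0 * gg r m = q 1 ^ ((r + 1) ^ 2 + (r + 1) * m) * (de r * Bv (r + 1)) := by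
      rw [de_Bv']; unfold gg; ring
    rw [this, ← mul_assoc]
    unfold Bv
    rw [← tsum_mul_left]
    refine tsum_congr fun i => ?_
    unfold hh; ring
  have h2 : ∑' p, hh m p = ∑' L : ℕ, s (L + m) L := by
    rw [← Finset.HasAntidiagonal.sigmaAntidiagonalEquivProd.tsum_eq (f := hh m)]
    have hs : Summable (fun c => hh m (Finset.HasAntidiagonal.sigmaAntidiagonalEquivProd c)) :=
      (Finset.HasAntidiagonal.sigmaAntidiagonalEquivProd.summable_iff (f := hh m)).2 (shh m)
    rw [hs.tsum_sigma]
    refine tsum_congr fun L => ?_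
    rw [tsum_fintype, s_formula, Finset.univ_eq_attach]
    simp only [Finset.HasAntidiagonal.sigmaAntidiagonalEquivProd_apply]
    rw [Finset.sum_attach (Finset.HasAntidiagonal.antidiagonal L) (fun p => hh m p),
      Finset.Nat.sum_antidiagonal_eq_sum_range_succ_mk, Finset.mul_sum]
    refine Finset.sum_congr rfl fun r hr => ?_
    obtain ⟨N, rfl⟩ := Nat.exists_eq_add_of_le (Nat.lt_succ_iff.1 (Finset.mem_range.1 hr))
    rw [show r + N - r = N by omega]
    unfold hh
    ring
  rw [← h2, h1]

def eLk : ℕ × ℤ ≃ ℕ × ℕ where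
  toFun p := (p.1 + p.2.toNat, p.1 + (-p.2).toNat)
  invFun p := (min p.1 p.2, (p.1 : ℤ) - p.2)
  left_inv := fun ⟨i, m⟩ => by
    simp only [Prod.mk.injEq]; constructor <;> omega
  right_inv := fun ⟨i, m⟩ => by
    simp only [Prod.mk.injEq]; constructor <;> omega

noncomputable def tt (χ : ℤ → ℤ) (p : ℕ × ℕ) : LK := (χ ((p.1 : ℤ) - p.2) : LK) * s p.2 p.1

theorem stt (χ : ℤ → ℤ) : Summable (tt χ) := by
  refine summable_two _ (fun p => ((p.1 : ℤ), (p.2 : ℤ))) (fun a b h => ?_) fun p => ?_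
  · simp only [Prod.mk.injEq, Nat.cast_inj] at h
    exact Prod.ext h.1 h.2
  · unfold tt
    refine (ord_intCast_mul (ord_s _ _) _).mono ?_
    simp only [Nat.abs_cast]; omega

theorem tt_e (χ : ℤ → ℤ) (p : ℕ × ℤ) : tt χ (eLk p) = (χ p.2 : LK) * s (p.1 + p.2.natAbs) p.1 := by
  obtain ⟨i, m⟩ := p
  simp only [tt, eLk, Equiv.coe_fn_mk]
  rcases le_total 0 m with h | h
  · rw [show (-m).toNat = 0 by omega, show m.natAbs = m.toNat by omega, s_symm]
    congr 3
    push_cast; omega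
  · rw [show m.toNat = 0 by omega, show m.natAbs = (-m).toNat by omega]
    congr 3
    push_cast; omega

theorem ord_rho (r : ℕ) : OrdGE 0 (rho r) := by
  have h : rho r = (1 - q 1 ^ (r + 1)) ^ 2 * (1 - q 1 ^ (2 * r + 1 + 1))⁻¹ := by
    have n1 := y_ne_one r
    have n2 := y_add_ne (r + 1)
    have n3 : 1 - q 1 ^ (2 * r + 1 + 1) = (1 - q 1 ^ (r + 1)) * (1 + q 1 ^ (r + 1)) := by ring
    unfold rho
    rw [n3]
    field_simp
  rw [h]
  have : OrdGE 0 (1 - q 1 ^ (r + 1)) := by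
    rw [sub_eq_add_neg]; exact ord_one.add (ord_y0 _).neg
  rw [sq]
  exact ord_mul0 (ord_mul0 this this) (ord_yinv _)

theorem ord_neg_pow {N : ℤ} {x : LK} (h : OrdGE N x) (r : ℕ) : OrdGE N ((-1) ^ r * x) := by
  rcases neg_one_pow_eq_or LK r with h1 | h1 <;> rw [h1]
  · simpa using h
  · simpa using h.neg

theorem ord_gg (r m : ℕ) : OrdGE (r + m) (gg r m) := by
  unfold gg
  rw [mul_assoc, mul_comm (rho r)]
  refine ord_neg_pow (ord_mul0 (ord_y _) (ord_rho r)) r |>.mono ?_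
  push_cast
  nlinarith [mul_nonneg (Nat.cast_nonneg (α := ℤ) r) (Nat.cast_nonneg (α := ℤ) m)]

theorem total (χ : ℤ → ℤ) : ∑' p, tt χ p =
    Bv 0 * ∑' r : ℕ, (-1) ^ r * rho r * q 1 ^ ((r + 1) ^ 2) *
      ∑' m : ℤ, (χ m : LK) * q 1 ^ ((r + 1) * m.natAbs) := by
  have h0 : ∑' p, tt χ p = ∑' p : ℕ × ℤ, (χ p.2 : LK) * s (p.1 + p.2.natAbs) p.1 := by
    rw [← eLk.tsum_eq (f := tt χ)]
    exact tsum_congr fun p => tt_e χ p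
  have hs : Summable (fun p : ℕ × ℤ => (χ p.2 : LK) * s (p.1 + p.2.natAbs) p.1) := by
    have := (eLk.summable_iff (f := tt χ)).2 (stt χ)
    exact this.congr fun p => tt_e χ p
  have hg : Summable (fun p : ℕ × ℤ => (χ p.2 : LK) * gg p.1 p.2.natAbs) := by
    refine summable_two _ (fun p => ((p.1 : ℤ), p.2)) (fun a b h => ?_) fun p => ?_
    · simp only [Prod.mk.injEq, Nat.cast_inj] at h
      exact Prod.ext h.1 h.2
    · refine (ord_intCast_mul (ord_gg _ _) _).mono ?_
      simp only [Nat.abs_cast, Int.natCast_natAbs]; exact le_rfl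
  have h1 : ∑' p : ℕ × ℤ, (χ p.2 : LK) * s (p.1 + p.2.natAbs) p.1 =
      ∑' m : ℤ, ∑' i : ℕ, (χ m : LK) * s (i + m.natAbs) i := by
    rw [hs.tsum_prod]
    exact Summable.tsum_comm (f := fun (m : ℤ) (i : ℕ) => (χ m : LK) * s (i + m.natAbs) i)
      ((Equiv.prodComm ℤ ℕ).summable_iff (f := fun p : ℕ × ℤ => (χ p.2 : LK) * s (p.1 + p.2.natAbs) p.1) |>.2 hs)
  have h2 : ∑' m : ℤ, ∑' r : ℕ, (χ m : LK) * gg r m.natAbs =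
      ∑' r : ℕ, ∑' m : ℤ, (χ m : LK) * gg r m.natAbs :=
    Summable.tsum_comm (f := fun (r : ℕ) (m : ℤ) => (χ m : LK) * gg r m.natAbs) hg
  have e1 : ∀ m : ℤ, ∑' i : ℕ, (χ m : LK) * s (i + m.natAbs) i =
      Bv 0 * ∑' r : ℕ, (χ m : LK) * gg r m.natAbs := by
    intro m; rw [tsum_mul_left, tsum_mul_left, claim1]; ring
  rw [h0, h1, tsum_congr e1, tsum_mul_left, h2]
  congr 1
  refine tsum_congr fun r => ?_
  rw [← tsum_mul_left]
  refine tsum_congr fun m => ?_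
  unfold gg; rw [pow_add]; ring

end OP
end Part10

section Part11
open Filter Topology
namespace OP

theorem x5_ne (r : ℕ) : 1 - (q 1 ^ (r + 1)) ^ 5 ≠ 0 := by
  have := y_ne_one (5 * r + 4)
  rwa [show 5 * r + 4 + 1 = (r + 1) * 5 by ring, pow_mul] at this
theorem ord_x5 (r : ℕ) : OrdGE 0 (1 - (q 1 ^ (r + 1)) ^ 5)⁻¹ := by
  have := ord_yinv (5 * r + 4)
  rwa [show 5 * r + 4 + 1 = (r + 1) * 5 by ring, pow_mul] at this

theorem ssk (L : ℕ) : Summable (fun k : ℕ => s k L) :=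
  summable_lin _ 1 one_pos fun k => (ord_s k L).mono (by omega)
noncomputable def tL (L : ℕ) : LK := ∑' k : ℕ, s k L

theorem tL_rec (L : ℕ) : tL L * (1 - q 1 ^ (L + 1)) =
    q 1 ^ (L + 1) * (1 + 2 * ∑ i ∈ Finset.range L, tL i) := by
  have h : tL L = q 1 ^ (L + 1) + q 1 ^ (L + 1) * (tL L + 2 * ∑ i ∈ Finset.range L, tL i) := by
    conv_lhs => rw [tL, (ssk L).tsum_eq_zero_add]
    rw [s_zero]
    congr 1
    simp only [s_succ]
    rw [tsum_mul_left, (ssk L).tsum_add ((summable_sum fun i _ => ssk i).mul_left 2), tsum_mul_left,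
      Summable.tsum_finsetSum fun i _ => ssk i]
    rfl
  linear_combination h

theorem P_be (L : ℕ) : 2 * (1 + 2 * ∑ i ∈ Finset.range L, tL i) = be (L + 1) * (1 - q 1 ^ (L + 1)) := by
  induction L with
  | zero => rw [be_succ]; simp [be]; norm_num
  | succ L ih =>
    rw [Finset.sum_range_succ]
    have h := tL_rec L
    have h2 := be_succ (L + 1)
    have n1 := y_ne_one L
    have : (1 - q 1 ^ (L + 1)) * (2 * (1 + 2 * (∑ i ∈ Finset.range L, tL i + tL L)) -
      be (L + 1 + 1) * (1 - q 1 ^ (L + 1 + 1))) = 0 := by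
      linear_combination (1 + q 1 ^ (L + 1)) * ih + 4 * h - (1 - q 1 ^ (L + 1)) * h2
    exact sub_eq_zero.1 ((mul_eq_zero.1 this).resolve_left n1)

theorem tL_eq (L : ℕ) : 2 * tL L = q 1 ^ (L + 1) * be (L + 1) := by
  have h := tL_rec L
  have h2 := P_be L
  have n1 := y_ne_one L
  have : (1 - q 1 ^ (L + 1)) * (2 * tL L - q 1 ^ (L + 1) * be (L + 1)) = 0 := by
    linear_combination 2 * h + q 1 ^ (L + 1) * h2
  exact sub_eq_zero.1 ((mul_eq_zero.1 this).resolve_left n1)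

theorem B_eq : Bv 0 = 1 + 2 * ∑' p, tt (fun _ => 1) p := by
  have h1 : ∑' p, tt (fun _ => 1) p = ∑' L : ℕ, tL L := by
    rw [(stt _).tsum_prod]
    refine tsum_congr fun L => ?_
    unfold tL tt
    refine tsum_congr fun k => ?_
    simp
  rw [h1, ← tsum_mul_left, Bv, (sBv 0).tsum_eq_zero_add]
  congr 1
  · simp [be]
  · refine tsum_congr fun L => ?_
    rw [tL_eq]; ring

theorem per_sum (χ : ℤ → ℤ) (hχ : ∀ m, χ (m + 5) = χ m) (r : ℕ) :
    ∑' m : ℤ, (χ m : LK) * q 1 ^ ((r + 1) * m.natAbs) =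
      (∑ i ∈ Finset.range 5, ((χ i + χ (-i) : ℤ) : LK) * (q 1 ^ (r + 1)) ^ i) / (1 - (q 1 ^ (r + 1)) ^ 5)
        - χ 0 := by
  set f : ℤ → LK := fun m => (χ m : LK) * q 1 ^ ((r + 1) * m.natAbs) with hf
  have hs : Summable f := by
    refine summable_two _ (fun m => (m, 0)) (fun a b h => by simpa using h) fun m => ?_
    refine (ord_intCast_mul (ord_y _) _).mono ?_
    push_cast
    simp only [abs_zero, add_zero]
    nlinarith [abs_nonneg m]
  have h1 := hs.hasSum.nat_add_neg
  set g : ℕ → LK := fun n => f n + f (-n) with hg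
  have h2 := h1.summable.sum_add_tsum_nat_add 5
  have h3 : ∑' n : ℕ, g (n + 5) = (q 1 ^ (r + 1)) ^ 5 * ∑' n : ℕ, g n := by
    rw [← tsum_mul_left]
    refine tsum_congr fun n => ?_
    simp only [hg, hf, Int.natAbs_neg, Int.natAbs_natCast]
    have e1 : χ ((n + 5 : ℕ) : ℤ) = χ n := by push_cast; exact hχ n
    have e2 : χ (-((n + 5 : ℕ) : ℤ)) = χ (-n) := by
      rw [← hχ (-((n + 5 : ℕ) : ℤ))]; congr 1; push_cast; ring
    rw [e1, e2]; ring
  have h4 : ∑ i ∈ Finset.range 5, g i =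
      ∑ i ∈ Finset.range 5, ((χ i + χ (-i) : ℤ) : LK) * (q 1 ^ (r + 1)) ^ i := by
    refine Finset.sum_congr rfl fun i _ => ?_
    simp only [hg, hf, Int.natAbs_neg, Int.natAbs_natCast]
    push_cast; ring
  rw [h3, h4] at h2
  have h5 := h1.tsum_eq
  have h6 : f 0 = χ 0 := by simp [hf]
  rw [h6] at h5
  have n1 : 1 - (q 1 ^ (r + 1)) ^ 5 ≠ 0 := x5_ne r
  rw [eq_sub_iff_add_eq, ← h5, eq_div_iff n1]
  linear_combination - h2

theorem sYc (c : ℕ → LK) (hc : ∀ r, OrdGE 0 (c r)) : Summable (fun r : ℕ => (-1) ^ r * q 1 ^ ((r + 1) ^ 2) * c r) := by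
  refine summable_lin _ 1 one_pos fun r => ?_
  rw [mul_assoc]
  refine (ord_neg_pow (ord_mul0 (ord_y _) (hc r)) r).mono ?_
  push_cast; nlinarith

theorem ph_Y : ph = 1 - 2 * ∑' r : ℕ, (-1) ^ r * q 1 ^ ((r + 1) ^ 2) := by
  have h := sph.hasSum.nat_add_neg
  have h2 := h.summable.tsum_eq_zero_add
  rw [h.tsum_eq] at h2
  have e0 : mon 0 (0 ^ 2) = 1 := by rw [mon_zero_left]; exact q_zero
  have e : ∀ n : ℕ, mon ((n + 1 : ℕ) : ℤ) (((n + 1 : ℕ) : ℤ) ^ 2) + mon (-((n + 1 : ℕ) : ℤ)) ((-((n + 1 : ℕ) : ℤ)) ^ 2) =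
      (-2) * ((-1) ^ n * q 1 ^ ((n + 1) ^ 2)) := by
    intro n
    have a : mon (-((n + 1 : ℕ) : ℤ)) ((-((n + 1 : ℕ) : ℤ)) ^ 2) = mon ((n + 1 : ℕ) : ℤ) (((n + 1 : ℕ) : ℤ) ^ 2) :=
      mon_congr ⟨-((n + 1 : ℕ) : ℤ), by ring⟩ (by ring)
    rw [a]
    unfold mon
    rw [zpow_natCast, ← Nat.cast_pow, q_eq]; ring
  simp only [e] at h2
  rw [tsum_mul_left] at h2
  simp only [Nat.cast_zero, neg_zero, e0] at h2
  unfold ph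
  linear_combination h2

theorem B_ph : Bv 0 * ph = 1 := by
  have h := B_eq
  rw [total] at h
  have e : ∀ r : ℕ, (-1) ^ r * rho r * q 1 ^ ((r + 1) ^ 2) *
      ∑' m : ℤ, (((fun _ => 1 : ℤ → ℤ) m : ℤ) : LK) * q 1 ^ ((r + 1) * m.natAbs) = (-1) ^ r * q 1 ^ ((r + 1) ^ 2) := by
    intro r
    rw [per_sum (fun _ => 1) (fun _ => rfl)]
    have n1 := y_ne_one r
    have n2 := y_add_ne (r + 1)
    have n3 : 1 - (q 1 ^ (r + 1)) ^ 5 ≠ 0 := x5_ne r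
    unfold rho
    simp only [Finset.sum_range_succ, Finset.sum_range_zero]
    generalize q 1 ^ (r + 1) = x at *
    push_cast
    field_simp
    ring
  rw [tsum_congr e] at h
  rw [ph_Y]
  linear_combination h

/-- the character -/
def ch (m : ℤ) : ℤ := (if 5 ∣ m then 1 else 0) - (if 5 ∣ m - 1 then 1 else 0)
theorem ch_per (m : ℤ) : ch (m + 5) = ch m := by
  unfold ch
  rw [show m + 5 - 1 = m - 1 + 5 by ring]
  simp

noncomputable def F1 (r : ℕ) : LK := (q 1 ^ (r + 1) - (q 1 ^ (r + 1)) ^ 4) * (1 - (q 1 ^ (r + 1)) ^ 5)⁻¹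
noncomputable def F2 (r : ℕ) : LK := ((q 1 ^ (r + 1)) ^ 2 - (q 1 ^ (r + 1)) ^ 3) * (1 - (q 1 ^ (r + 1)) ^ 5)⁻¹

theorem ord_F {a b : ℕ} (r : ℕ) : OrdGE 0 (((q 1 ^ (r + 1)) ^ a - (q 1 ^ (r + 1)) ^ b) * (1 - (q 1 ^ (r + 1)) ^ 5)⁻¹) := by
  refine ord_mul0 ?_ (ord_x5 r)
  rw [← pow_mul, ← pow_mul, sub_eq_add_neg]
  exact (ord_y0 _).add (ord_y0 _).neg

theorem ord_F1 (r : ℕ) : OrdGE 0 (F1 r) := by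
  have := ord_F (a := 1) (b := 4) r
  rwa [pow_one] at this
theorem ord_F2 (r : ℕ) : OrdGE 0 (F2 r) := ord_F r

theorem SS_sum (jj : ℕ) (h5 : jj ≤ 5) : SS jj = - ∑' r : ℕ, (-1) ^ r * q 1 ^ ((r + 1) ^ 2) *
    (((q 1 ^ (r + 1)) ^ jj - (q 1 ^ (r + 1)) ^ (5 - jj)) * (1 - (q 1 ^ (r + 1)) ^ 5)⁻¹) := by
  have hs := sSt (jj := jj) (by omega) (by omega)
  have h0 : ∀ r : ℤ, St jj (0, r) = 0 := fun r => by simp [St]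
  have fib1 : ∀ n : ℕ, ∑' r : ℤ, St jj (((n + 1 : ℕ) : ℤ), r) =
      - ((-1) ^ n * q 1 ^ ((n + 1) ^ 2) * (q 1 ^ (n + 1)) ^ jj * (1 - (q 1 ^ (n + 1)) ^ 5)⁻¹) := by
    intro n
    have hg := (summable_geom (a := 5 * (n + 1 : ℕ)) (by positivity)).hasSum
    rw [tsum_geom (by positivity)] at hg
    have A : HasSum (fun r : ℕ => St jj (((n + 1 : ℕ) : ℤ), (r : ℤ)))
        (mon (n + 1 : ℕ) ((n + 1 : ℕ) ^ 2 + jj * (n + 1 : ℕ)) * (1 - q (5 * (n + 1 : ℕ)))⁻¹) := by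
      refine (hg.mul_left _).congr_fun fun r => ?_
      unfold St
      rw [if_neg (by simp; omega)]
      rw [show sg ((n + 1 : ℕ) : ℤ) (r : ℤ) = 1 by
        have : sgZ ((n + 1 : ℕ) : ℤ) (r : ℤ) = 1 := by
          unfold sgZ; rw [if_pos (by omega), if_neg (by omega)]; rfl
        rw [sg, this]; norm_num]
      rw [mul_comm (mon _ _), q_mul_mon, one_mul]
      congr 1; simp only; ring
    have Z : HasSum (fun r : ℕ => St jj (((n + 1 : ℕ) : ℤ), -((r : ℤ) + 1))) 0 := by
      convert hasSum_zero (α := LK) (β := ℕ) using 2 with r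
      unfold St
      rw [if_neg (by simp; omega)]
      rw [show sg ((n + 1 : ℕ) : ℤ) (-((r : ℤ) + 1)) = 0 by
        have : sgZ ((n + 1 : ℕ) : ℤ) (-((r : ℤ) + 1)) = 0 := by
          unfold sgZ; rw [if_pos (by omega), if_pos (by omega)]; rfl
        rw [sg, this]; norm_num]
      simp
    have := (HasSum.of_nat_of_neg_add_one (f := fun r : ℤ => St jj (((n + 1 : ℕ) : ℤ), r)) A Z).tsum_eq
    rw [this, add_zero]
    have e1 : q (5 * (n + 1 : ℕ)) = (q 1 ^ (n + 1)) ^ 5 := by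
      rw [← pow_mul, ← q_eq]; congr 1; push_cast; ring
    have e2 : mon (n + 1 : ℕ) ((n + 1 : ℕ) ^ 2 + jj * (n + 1 : ℕ)) =
        - ((-1) ^ n * q 1 ^ ((n + 1) ^ 2) * (q 1 ^ (n + 1)) ^ jj) := by
      unfold mon
      rw [zpow_natCast, q_add, ← Nat.cast_pow, ← Nat.cast_mul, q_eq, q_eq]; ring
    rw [e1, e2]; ring
  have fib2 : ∀ n : ℕ, ∑' r : ℤ, St jj (-((n + 1 : ℕ) : ℤ), r) =
      ((-1) ^ n * q 1 ^ ((n + 1) ^ 2) * (q 1 ^ (n + 1)) ^ (5 - jj) * (1 - (q 1 ^ (n + 1)) ^ 5)⁻¹) := by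
    intro n
    have hg := (summable_geom (a := 5 * (n + 1 : ℕ)) (by positivity)).hasSum
    rw [tsum_geom (by positivity)] at hg
    have A : HasSum (fun r : ℕ => St jj (-((n + 1 : ℕ) : ℤ), -((r : ℤ) + 1)))
        (-mon (n + 1 : ℕ) ((n + 1 : ℕ) ^ 2 + (5 - jj) * (n + 1 : ℕ)) * (1 - q (5 * (n + 1 : ℕ)))⁻¹) := by
      refine (hg.mul_left _).congr_fun fun r => ?_
      unfold St
      rw [if_neg (by simp; omega)]
      rw [show sg (-((n + 1 : ℕ) : ℤ)) (-((r : ℤ) + 1)) = -1 by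
        have : sgZ (-((n + 1 : ℕ) : ℤ)) (-((r : ℤ) + 1)) = -1 := by
          unfold sgZ; rw [if_neg (by omega), if_pos (by omega)]; rfl
        rw [sg, this]; norm_num]
      rw [mul_comm (-mon _ _), mul_neg (q _), q_mul_mon, neg_one_mul]
      congr 1
      refine mon_congr ⟨-((n + 1 : ℕ) : ℤ), ?_⟩ ?_ <;> simp only <;> ring
    have Z : HasSum (fun r : ℕ => St jj (-((n + 1 : ℕ) : ℤ), (r : ℤ))) 0 := by
      convert hasSum_zero (α := LK) (β := ℕ) using 2 with r
      unfold St
      rw [if_neg (by simp; omega)]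
      rw [show sg (-((n + 1 : ℕ) : ℤ)) (r : ℤ) = 0 by
        have : sgZ (-((n + 1 : ℕ) : ℤ)) (r : ℤ) = 0 := by
          unfold sgZ; rw [if_neg (by omega), if_neg (by omega)]; rfl
        rw [sg, this]; norm_num]
      simp
    have := (HasSum.of_nat_of_neg_add_one (f := fun r : ℤ => St jj (-((n + 1 : ℕ) : ℤ), r)) Z A).tsum_eq
    rw [this, zero_add]
    have e1 : q (5 * (n + 1 : ℕ)) = (q 1 ^ (n + 1)) ^ 5 := by
      rw [← pow_mul, ← q_eq]; congr 1; push_cast; ring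
    have e2 : mon (n + 1 : ℕ) ((n + 1 : ℕ) ^ 2 + (5 - jj) * (n + 1 : ℕ)) =
        - ((-1) ^ n * q 1 ^ ((n + 1) ^ 2) * (q 1 ^ (n + 1)) ^ (5 - jj)) := by
      unfold mon
      rw [zpow_natCast, q_add, ← Nat.cast_pow, show (5 : ℤ) - jj = ((5 - jj : ℕ) : ℤ) by omega,
        ← Nat.cast_mul, q_eq, q_eq]; ring
    rw [e1, e2]; ring
  have h := hs.prod.hasSum.nat_add_neg
  have h2 := h.summable.tsum_eq_zero_add
  rw [h.tsum_eq] at h2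
  simp only [fib1, fib2] at h2
  simp only [Nat.cast_zero, neg_zero, h0, tsum_zero, add_zero, zero_add] at h2
  unfold SS
  rw [hs.tsum_prod, h2, ← tsum_neg]
  refine tsum_congr fun n => ?_
  ring

theorem Dh_eq : Dh = 1 + 2 * ∑' p, tt ch p := by
  have hB := B_ph
  have nph : ph ≠ 0 := fun h => by rw [h, mul_zero] at hB; exact zero_ne_one hB
  apply mul_left_cancel₀ nph
  rw [ph_Dh, total]
  have e : ∀ r : ℕ, (-1) ^ r * rho r * q 1 ^ ((r + 1) ^ 2) *
      ∑' m : ℤ, (ch m : LK) * q 1 ^ ((r + 1) * m.natAbs) = (-1) ^ r * q 1 ^ ((r + 1) ^ 2) -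
        3 * ((-1) ^ r * q 1 ^ ((r + 1) ^ 2) * F1 r) + 4 * ((-1) ^ r * q 1 ^ ((r + 1) ^ 2) * F2 r) := by
    intro r
    rw [per_sum ch ch_per]
    have n1 := y_ne_one r
    have n2 := y_add_ne (r + 1)
    have n3 : 1 - (q 1 ^ (r + 1)) ^ 5 ≠ 0 := x5_ne r
    unfold rho F1 F2
    simp only [Finset.sum_range_succ, Finset.sum_range_zero]
    rw [show ch ((0 : ℕ) : ℤ) + ch (-((0 : ℕ) : ℤ)) = 2 by decide,
      show ch ((1 : ℕ) : ℤ) + ch (-((1 : ℕ) : ℤ)) = -1 by decide,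
      show ch ((2 : ℕ) : ℤ) + ch (-((2 : ℕ) : ℤ)) = 0 by decide,
      show ch ((3 : ℕ) : ℤ) + ch (-((3 : ℕ) : ℤ)) = 0 by decide,
      show ch ((4 : ℕ) : ℤ) + ch (-((4 : ℕ) : ℤ)) = -1 by decide,
      show ch 0 = 1 by decide]
    generalize q 1 ^ (r + 1) = x at *
    push_cast
    field_simp
    ring
  have s0 : Summable (fun r : ℕ => (-1 : LK) ^ r * q 1 ^ ((r + 1) ^ 2)) := by
    simpa using sYc (fun _ => 1) (fun _ => ord_one)
  have s1 := sYc F1 ord_F1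
  have s2 := sYc F2 ord_F2
  rw [tsum_congr e, (s0.sub (s1.mul_left 3)).tsum_add (s2.mul_left 4), s0.tsum_sub (s1.mul_left 3),
    tsum_mul_left, tsum_mul_left]
  have c1 : SS 1 = - ∑' r : ℕ, (-1) ^ r * q 1 ^ ((r + 1) ^ 2) * F1 r := by
    have := SS_sum 1 (by norm_num)
    simpa [F1] using this
  have c2 : SS 2 = - ∑' r : ℕ, (-1) ^ r * q 1 ^ ((r + 1) ^ 2) * F2 r := by
    have := SS_sum 2 (by norm_num)
    simpa [F2] using this
  have hY := ph_Y
  rw [c1, c2]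
  generalize ∑' r : ℕ, (-1) ^ r * q 1 ^ ((r + 1) ^ 2) * F1 r = f1 at *
  generalize ∑' r : ℕ, (-1) ^ r * q 1 ^ ((r + 1) ^ 2) * F2 r = f2 at *
  generalize (∑' r : ℕ, (-1 : LK) ^ r * q 1 ^ ((r + 1) ^ 2)) = y0 at *
  linear_combination - hY - 2 * (y0 - 3 * f1 + 4 * f2) * hB

end OP
end Part11

section Part12
open Filter Topology
namespace OP

theorem sup_mem (m : Multiset ℕ) (h : m.sup ≠ 0) : m.sup ∈ m := by
  induction m using Multiset.induction_on with
  | empty => simp at h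
  | cons a m ih =>
    rw [Multiset.sup_cons] at h ⊢
    rcases le_total a m.sup with h1 | h1
    · rw [sup_eq_right.2 h1] at h ⊢
      exact Multiset.mem_cons_of_mem (ih h)
    · rw [sup_eq_left.2 h1]; exact Multiset.mem_cons_self a m

/-- number of choices of overlined parts -/
def wt {n : ℕ} (p : n.Partition) : ℚ := 2 ^ p.parts.toFinset.card

/-- weighted count of partitions with given largest part and number of parts -/
def W (L k n : ℕ) : ℚ := ∑ p : n.Partition, if p.parts.sup = L ∧ p.parts.card = k then wt p else 0

theorem sup_zero_iff {n : ℕ} (p : n.Partition) : p.parts.sup = 0 ↔ p.parts.card = 0 := by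
  rw [Multiset.card_eq_zero]
  constructor
  · intro h
    by_contra hne
    obtain ⟨a, ha⟩ := Multiset.exists_mem_of_ne_zero hne
    have h1 := p.parts_pos ha
    have h2 := Multiset.le_sup ha
    omega
  · intro h; rw [h]; simp

theorem W_succ_zero (L n : ℕ) : W (L + 1) 0 n = 0 := by
  refine Finset.sum_eq_zero fun p _ => ?_
  rw [if_neg]
  rintro ⟨h1, h2⟩
  rw [(sup_zero_iff p).2 h2] at h1; omega
theorem W_zero_succ (k n : ℕ) : W 0 (k + 1) n = 0 := by
  refine Finset.sum_eq_zero fun p _ => ?_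
  rw [if_neg]
  rintro ⟨h1, h2⟩
  rw [(sup_zero_iff p).1 h1] at h2; omega
theorem W_zero_zero (n : ℕ) : W 0 0 n = if n = 0 then 1 else 0 := by
  split_ifs with h
  · subst h
    unfold W
    rw [Fintype.sum_unique]
    have : (default : Nat.Partition 0).parts = 0 := by
      exact Multiset.card_eq_zero.1 (by
        have := (default : Nat.Partition 0).parts_sum
        by_contra hne
        obtain ⟨a, ha⟩ := Multiset.exists_mem_of_ne_zero (fun h => hne (Multiset.card_eq_zero.2 h))
        have h1 := (default : Nat.Partition 0).parts_pos ha
        have h2 := Multiset.le_sum_of_mem ha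
        omega)
    simp [wt, this]
  · refine Finset.sum_eq_zero fun p _ => ?_
    rw [if_neg]
    rintro ⟨h1, h2⟩
    have := p.parts_sum
    rw [Multiset.card_eq_zero.1 h2] at this
    simp at this; omega

/-- add a part -/
def consP {n : ℕ} (L : ℕ) (p : n.Partition) : (n + (L + 1)).Partition where
  parts := (L + 1) ::ₘ p.parts
  parts_pos := fun {i} hi => by
    rcases Multiset.mem_cons.1 hi with rfl | hi
    · omega
    · exact p.parts_pos hi
  parts_sum := by rw [Multiset.sum_cons, p.parts_sum, add_comm]

theorem W_step (L k n : ℕ) : W (L + 1) (k + 1) (n + (L + 1)) =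
    W (L + 1) k n + 2 * ∑ i ∈ Finset.range (L + 1), W i k n := by
  have hR : W (L + 1) k n + 2 * ∑ i ∈ Finset.range (L + 1), W i k n =
      ∑ p : n.Partition, if p.parts.sup ≤ L + 1 ∧ p.parts.card = k then
        (if p.parts.sup = L + 1 then 1 else 2) * wt p else 0 := by
    unfold W
    rw [Finset.sum_comm, Finset.mul_sum, ← Finset.sum_add_distrib]
    refine Finset.sum_congr rfl fun p _ => ?_
    by_cases hk : p.parts.card = k
    · simp only [hk, and_true]
      rw [Finset.sum_ite_eq]
      by_cases h1 : p.parts.sup = L + 1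
      · simp [h1]
      · by_cases h2 : p.parts.sup ≤ L + 1
        · have : p.parts.sup ∈ Finset.range (L + 1) := Finset.mem_range.2 (by omega)
          simp [h1, h2, this]
        · have : p.parts.sup ∉ Finset.range (L + 1) := fun h => h2 (Finset.mem_range.1 h).le
          simp [h1, h2, this]
    · simp [hk]
  rw [hR, ← Finset.sum_filter]
  unfold W
  rw [← Finset.sum_filter]
  symm
  refine Finset.sum_nbij (consP L) ?_ ?_ ?_ ?_
  · intro p hp
    simp only [Finset.mem_filter, Finset.mem_univ, true_and] at hp ⊢
    simp only [consP, Multiset.sup_cons, Multiset.card_cons, hp.2, and_true]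
    exact sup_eq_left.2 hp.1
  · intro p _ p' _ h
    have := congrArg Nat.Partition.parts h
    simp only [consP, Multiset.cons_inj_right] at this
    exact Nat.Partition.ext this
  · intro p hp
    simp only [Finset.coe_filter, Finset.mem_univ, true_and, Set.mem_ofPred_eq] at hp
    have hm : L + 1 ∈ p.parts := by
      have := sup_mem p.parts (by omega)
      rwa [hp.1] at this
    have he := Multiset.cons_erase hm
    have h1 := p.parts_sum
    rw [← he, Multiset.sum_cons] at h1
    refine ⟨⟨p.parts.erase (L + 1), fun hi => p.parts_pos (Multiset.mem_of_mem_erase hi), by omega⟩, ?_, ?_⟩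
    · simp only [Finset.coe_filter, Finset.mem_univ, true_and, Set.mem_ofPred_eq]
      constructor
      · exact (Multiset.sup_mono (Multiset.erase_subset _ _)).trans hp.1.le
      · rw [Multiset.card_erase_of_mem hm, hp.2]; rfl
    · exact Nat.Partition.ext he
  · intro p hp
    simp only [Finset.mem_filter, Finset.mem_univ, true_and] at hp
    unfold wt consP
    simp only [Multiset.toFinset_cons]
    by_cases h : p.parts.sup = L + 1
    · have hm : L + 1 ∈ p.parts := by
        have := sup_mem p.parts (by omega)
        rwa [h] at this
      rw [if_pos h, Finset.insert_eq_of_mem (Multiset.mem_toFinset.2 hm), one_mul]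
    · have hm : L + 1 ∉ p.parts := fun hm => by
        have := Multiset.le_sup hm
        omega
      rw [if_neg h, Finset.card_insert_of_notMem (fun h' => hm (Multiset.mem_toFinset.1 h')), pow_succ,
        mul_comm]

theorem W_small (L k n : ℕ) (h : n < L) : W L k n = 0 := by
  refine Finset.sum_eq_zero fun p _ => ?_
  rw [if_neg]
  rintro ⟨h1, -⟩
  have hm := sup_mem p.parts (by omega)
  have := Nat.Partition.le_of_mem_parts hm
  omega

theorem coeff_two (x : LK) (n : ℤ) : (2 * x).coeff n = 2 * x.coeff n := by
  rw [two_mul, HahnSeries.coeff_add]; ring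

theorem s_coeff (k L n : ℕ) : 2 * (s k L).coeff n = W (L + 1) (k + 1) n := by
  induction k generalizing L n with
  | zero =>
    rw [s_zero, ← q_eq, coeff_q]
    by_cases h : n < L + 1
    · rw [W_small _ _ _ h, if_neg (by omega)]; simp
    · obtain ⟨m, rfl⟩ := Nat.exists_eq_add_of_le' (not_lt.1 h)
      rw [zero_add, W_step, W_succ_zero, Finset.sum_range_succ', W_zero_zero,
        Finset.sum_eq_zero fun i _ => W_succ_zero i m]
      by_cases hm : m = 0
      · simp [hm]
      · rw [if_neg (by omega), if_neg hm]; simp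
  | succ k ih =>
    rw [s_succ, ← q_eq, coeff_q_mul]
    by_cases h : n < L + 1
    · rw [W_small _ _ _ h]
      have : OrdGE 0 (s k L + 2 * ∑ i ∈ Finset.range L, s k i) := by
        refine ((ord_s k L).mono (by omega)).add ?_
        exact ord_natCast_mul (k := 2) (OrdGE.sum fun i _ => (ord_s k i).mono (by omega))
      rw [this _ (by omega), mul_zero]
    · obtain ⟨m, rfl⟩ := Nat.exists_eq_add_of_le' (not_lt.1 h)
      rw [W_step, Finset.sum_range_succ', W_zero_succ,
        show (((m + (L + 1) : ℕ) : ℤ) - ((L + 1 : ℕ) : ℤ)) = (m : ℤ) by push_cast; ring,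
        HahnSeries.coeff_add, coeff_two, HahnSeries.coeff_sum, ← ih]
      simp only [← ih]
      rw [← Finset.mul_sum]; ring

theorem total_coeff (χ : ℤ → ℤ) (n : ℕ) (hn : 0 < n) : (2 * ∑' p, tt χ p).coeff (n : ℤ) =
    ∑ p : n.Partition, (χ ((p.parts.sup : ℤ) - p.parts.card) : ℚ) * wt p := by
  obtain ⟨t0, ht0⟩ := coeff_hasSum (stt χ).hasSum n
  set t := t0 ∪ (Finset.range n ×ˢ Finset.range n) with ht
  rw [coeff_two, ht0 t Finset.subset_union_left, Finset.mul_sum]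
  have e : ∀ a ∈ t, 2 * (tt χ a).coeff n = ∑ p : n.Partition,
      if p.parts.sup = a.1 + 1 ∧ p.parts.card = a.2 + 1 then (χ ((a.1 : ℤ) - a.2) : ℚ) * wt p else 0 := by
    intro a _
    have h1 : (tt χ a).coeff n = (χ ((a.1 : ℤ) - a.2) : ℚ) * (s a.2 a.1).coeff n := by
      unfold tt
      rw [← zsmul_eq_mul, ← zsmul_eq_mul, HahnSeries.coeff_smul]
    rw [h1]
    have h2 := s_coeff a.2 a.1 n
    rw [mul_left_comm, h2, W, Finset.mul_sum]
    refine Finset.sum_congr rfl fun p _ => ?_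
    rw [mul_ite, mul_zero]
  rw [Finset.sum_congr rfl e, Finset.sum_comm]
  refine Finset.sum_congr rfl fun p _ => ?_
  have hs : p.parts.sup ≠ 0 := fun h => by
    have := Multiset.card_eq_zero.1 ((sup_zero_iff p).1 h)
    have h2 := p.parts_sum
    rw [this] at h2; simp at h2; omega
  have hc : p.parts.card ≠ 0 := fun h => hs ((sup_zero_iff p).2 h)
  have hs' := Nat.Partition.le_of_mem_parts (sup_mem p.parts hs)
  have hc' : p.parts.card ≤ n := by
    have := Multiset.card_nsmul_le_sum (s := p.parts) (a := 1) (fun x hx => p.parts_pos hx)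
    rw [p.parts_sum] at this; simpa using this
  obtain ⟨a, ha⟩ := Nat.exists_eq_succ_of_ne_zero hs
  obtain ⟨b, hb⟩ := Nat.exists_eq_succ_of_ne_zero hc
  rw [Finset.sum_eq_single (a, b)]
  · rw [if_pos ⟨ha, hb⟩, ha, hb]; congr 3; push_cast; ring
  · intro c _ hne
    rw [if_neg]
    rintro ⟨h1, h2⟩
    exact hne (Prod.ext (by simp only; omega) (by simp only; omega))
  · intro h
    exfalso; apply h
    rw [ht]
    refine Finset.mem_union_right _ (Finset.mem_product.2 ⟨Finset.mem_range.2 ?_, Finset.mem_range.2 ?_⟩)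
    · simp only; omega
    · simp only; omega

/-- regrouping overpartitions by the underlying partition -/
def eqv (a : ℤ) (n : ℕ) : {P : Overpartition n // P.rank ≡ a [ZMOD ((5 : ℕ) : ℤ)]} ≃
    Σ p : {p : n.Partition // ((p.parts.sup : ℤ) - p.parts.card) ≡ a [ZMOD 5]},
      {S : Finset ℕ // S ∈ p.1.parts.toFinset.powerset} where
  toFun P := ⟨⟨P.1.1.1, P.2⟩, ⟨P.1.1.2, Finset.mem_powerset.2 P.1.2⟩⟩
  invFun x := ⟨⟨(x.1.1, x.2.1), Finset.mem_powerset.1 x.2.2⟩, x.1.2⟩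
  left_inv _ := rfl
  right_inv _ := rfl

theorem nbar_eq (a : ℤ) (n : ℕ) : (nbar a 5 n : ℚ) = ∑ p : n.Partition,
    if ((p.parts.sup : ℤ) - p.parts.card) ≡ a [ZMOD 5] then wt p else 0 := by
  unfold nbar
  rw [Nat.card_congr (eqv a n), Nat.card_sigma, ← Finset.sum_filter]
  push_cast
  rw [Finset.sum_subtype (Finset.univ.filter fun p : n.Partition =>
    ((p.parts.sup : ℤ) - p.parts.card) ≡ a [ZMOD 5]) (p := fun p : n.Partition =>
    ((p.parts.sup : ℤ) - p.parts.card) ≡ a [ZMOD 5]) (by simp)]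
  refine Finset.sum_congr (by congr) fun p _ => ?_
  rw [Nat.card_eq_fintype_card, Fintype.card_coe, Finset.card_powerset, wt]
  push_cast; rfl

theorem main (n : ℕ) (hn : 0 < n) (h5 : n % 5 = 2 ∨ n % 5 = 4) : nbar 0 5 n < nbar 1 5 n := by
  have h := Dh_neg n h5
  rw [Dh_eq, HahnSeries.coeff_add, total_coeff _ _ hn, coeff_one_ne (by omega), zero_add] at h
  have e : ∑ p : n.Partition, (ch ((p.parts.sup : ℤ) - p.parts.card) : ℚ) * wt p =
      (nbar 0 5 n : ℚ) - nbar 1 5 n := by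
    rw [nbar_eq, nbar_eq, ← Finset.sum_sub_distrib]
    refine Finset.sum_congr rfl fun p _ => ?_
    generalize (p.parts.sup : ℤ) - p.parts.card = m
    have h0 : m ≡ 0 [ZMOD 5] ↔ 5 ∣ m := Int.modEq_zero_iff_dvd
    have h1 : m ≡ 1 [ZMOD 5] ↔ 5 ∣ m - 1 := by
      rw [Int.modEq_comm, Int.modEq_iff_dvd]
    simp only [h0, h1]
    unfold ch
    push_cast
    split_ifs <;> ring
  rw [e] at h
  exact_mod_cast sub_neg.1 h

end OP
end Part12

theorem stmt2 (n : ℕ) (hn : 0 < n) (h5 : n % 5 = 2 ∨ n % 5 = 4) :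
    nbar 0 5 n < nbar 1 5 n := OP.main n hn h5
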